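/- arXiv:1909.05796 — 16 statements merged into one kernel-verified Lean document; each statement's English description precedes it below -/
import Mathlib

section
/- Let α₁, α₂, α₃ be distinct complex numbers. Then (α₁+α₂+α₃)² = 3(α₁α₂+α₁α₃+α₂α₃) holds if and only if exactly one of the two equations α₁e₁+α₂e₂+α₃e₃ = 0 and α₁e₂+α₂e₁+α₃e₃ = 0 holds (i.e. one of them holds but not both). -/
theorem stmt_0 (α₁ α₂ α₃ e₁ e₂ e₃ : ℂ)
    (he₁ : e₁ = Complex.exp (-(Real.pi : ℂ) / 3 * Complex.I))
    (he₂ : e₂ = Complex.exp ((Real.pi : ℂ) / 3 * Complex.I))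
    (he₃ : e₃ = -1)
    (h12 : α₁ ≠ α₂) (h13 : α₁ ≠ α₃) (h23 : α₂ ≠ α₃) :
    (α₁ + α₂ + α₃) ^ 2 = 3 * (α₁ * α₂ + α₁ * α₃ + α₂ * α₃) ↔
      Xor' (α₁ * e₁ + α₂ * e₂ + α₃ * e₃ = 0) (α₁ * e₂ + α₂ * e₁ + α₃ * e₃ = 0) := by
  have hp : e₁ * e₂ = 1 := by
    rw [he₁, he₂, ← Complex.exp_add, ← Complex.exp_zero]
    congr 1
    ring
  have hs : e₁ + e₂ = 1 := by
    have h := Complex.two_cos ((Real.pi : ℂ) / 3)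
    have hc : Complex.cos ((Real.pi : ℂ) / 3) = 1 / 2 := by
      have := congrArg (fun x : ℝ => (x : ℂ)) Real.cos_pi_div_three
      push_cast at this
      exact this
    rw [hc] at h
    rw [he₁, he₂, neg_div, add_comm, ← h]
    norm_num
  clear he₁ he₂
  subst he₃
  have key : (α₁ * e₁ + α₂ * e₂ + α₃ * (-1)) * (α₁ * e₂ + α₂ * e₁ + α₃ * (-1))
      = (α₁ + α₂ + α₃) ^ 2 - 3 * (α₁ * α₂ + α₁ * α₃ + α₂ * α₃) := by
    obtain rfl : e₂ = 1 - e₁ := by linear_combination hs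
    linear_combination (α₁ ^ 2 + α₂ ^ 2 - 2 * α₁ * α₂) * hp
  have hn : ¬ ((α₁ * e₁ + α₂ * e₂ + α₃ * (-1) = 0) ∧ (α₁ * e₂ + α₂ * e₁ + α₃ * (-1) = 0)) := by
    rintro ⟨ha, hb⟩
    have h : (α₁ - α₂) * (e₁ - e₂) = 0 := by linear_combination ha - hb
    rcases mul_eq_zero.1 h with h | h
    · exact h12 (sub_eq_zero.1 h)
    · have : (3 : ℂ) = 0 := by
        linear_combination (-(e₁ - e₂)) * h + (e₁ + e₂ + 1) * hs - 4 * hp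
      norm_num at this
  rw [← sub_eq_zero, ← key, mul_eq_zero]
  unfold Xor' Xor
  tauto
end

section
/- If α₁, α₂, α₃ are not vertices of an equilateral triangle, then for all z₁, z₂ ∈ ℂ: P(z₁,z₂,u*) = (1/3)·((α₁e₂+α₂e₁+α₃e₃)²/(α₁e₁+α₂e₂+α₃e₃))·(z₁−v*)(z₂−v*), and P(z₁,z₂,v*) = (1/3)·((α₁e₁+α₂e₂+α₃e₃)²/(α₁e₂+α₂e₁+α₃e₃))·(z₁−u*)(z₂−u*). -/
lemma aux_stmt (x y w e z₁ z₂ : ℂ) (he : e ^ 2 - e + 1 = 0)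
    (hA : x * (1 - e) + y * e + w * (-1) ≠ 0) (hB : x * e + y * (1 - e) + w * (-1) ≠ 0)
    (u v : ℂ)
    (hu : u = -((x * y * (-1) + x * w * e + y * w * (1 - e)) / (x * (1 - e) + y * e + w * (-1))))
    (hv : v = -((x * y * (-1) + x * w * (1 - e) + y * w * e) / (x * e + y * (1 - e) + w * (-1)))) :
    z₁ * z₂ * u + -(x + y + w) / 3 * (z₁ * z₂ + z₂ * u + u * z₁)
      + (x * y + x * w + y * w) / 3 * (z₁ + z₂ + u) + -(x * y * w)
    = 1 / 3 * ((x * e + y * (1 - e) + w * (-1)) ^ 2 / (x * (1 - e) + y * e + w * (-1)))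
      * ((z₁ - v) * (z₂ - v)) := by
  have h1 : -3 * (x * y * (-1) + x * w * e + y * w * (1 - e))
      - (x + y + w) * (x * (1 - e) + y * e + w * (-1))
      = (x * e + y * (1 - e) + w * (-1)) ^ 2 := by
    linear_combination (-(x - y) ^ 2) * he
  have h2 : (x + y + w) * (x * y * (-1) + x * w * e + y * w * (1 - e))
      + (x * y + x * w + y * w) * (x * (1 - e) + y * e + w * (-1))
      = (x * e + y * (1 - e) + w * (-1)) * (x * y * (-1) + x * w * (1 - e) + y * w * e) := by
    linear_combination (w * (x - y) ^ 2) * he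
  have h3 : -(x * y + x * w + y * w) * (x * y * (-1) + x * w * e + y * w * (1 - e))
      - 3 * (x * y * w) * (x * (1 - e) + y * e + w * (-1))
      = (x * y * (-1) + x * w * (1 - e) + y * w * e) ^ 2 := by
    linear_combination (-(w ^ 2 * (x - y) ^ 2)) * he
  generalize x * (1 - e) + y * e + w * (-1) = A at *
  generalize x * e + y * (1 - e) + w * (-1) = B at *
  generalize x * y * (-1) + x * w * e + y * w * (1 - e) = N at *
  generalize x * y * (-1) + x * w * (1 - e) + y * w * e = M at *
  have hr : 1 / 3 * (B ^ 2 / A) * ((z₁ - v) * (z₂ - v))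
      = 1 / 3 * ((B ^ 2 * z₁ * z₂ + B * M * (z₁ + z₂) + M ^ 2) / A) := by
    rw [hv]; field_simp; ring
  rw [hr, ← h1, ← h2, ← h3, hu]
  field_simp
  ring

theorem stmt_2 (α₁ α₂ α₃ e₁ e₂ e₃ a b c u v : ℂ) (P : ℂ → ℂ → ℂ → ℂ)
    (he₁ : e₁ = Complex.exp (-(Real.pi : ℂ) / 3 * Complex.I))
    (he₂ : e₂ = Complex.exp ((Real.pi : ℂ) / 3 * Complex.I))
    (he₃ : e₃ = -1)
    (h12 : α₁ ≠ α₂) (h13 : α₁ ≠ α₃) (h23 : α₂ ≠ α₃)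
    (ha : a = -(α₁ + α₂ + α₃))
    (hb : b = α₁ * α₂ + α₁ * α₃ + α₂ * α₃)
    (hc : c = -(α₁ * α₂ * α₃))
    (hP : ∀ z₁ z₂ z₃, P z₁ z₂ z₃ =
      z₁ * z₂ * z₃ + a / 3 * (z₁ * z₂ + z₂ * z₃ + z₃ * z₁) + b / 3 * (z₁ + z₂ + z₃) + c)
    (hu : u = -((α₁ * α₂ * e₃ + α₁ * α₃ * e₂ + α₂ * α₃ * e₁) /
      (α₁ * e₁ + α₂ * e₂ + α₃ * e₃)))
    (hv : v = -((α₁ * α₂ * e₃ + α₁ * α₃ * e₁ + α₂ * α₃ * e₂) /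
      (α₁ * e₂ + α₂ * e₁ + α₃ * e₃)))
    (hne₁ : α₁ * e₁ + α₂ * e₂ + α₃ * e₃ ≠ 0)
    (hne₂ : α₁ * e₂ + α₂ * e₁ + α₃ * e₃ ≠ 0) :
    ∀ z₁ z₂ : ℂ,
      P z₁ z₂ u = 1 / 3 * ((α₁ * e₂ + α₂ * e₁ + α₃ * e₃) ^ 2 /
          (α₁ * e₁ + α₂ * e₂ + α₃ * e₃)) * ((z₁ - v) * (z₂ - v)) ∧
      P z₁ z₂ v = 1 / 3 * ((α₁ * e₁ + α₂ * e₂ + α₃ * e₃) ^ 2 /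
          (α₁ * e₂ + α₂ * e₁ + α₃ * e₃)) * ((z₁ - u) * (z₂ - u)) := by
  have hs : e₁ = 1 - e₂ := by
    have h : e₁ + e₂ = 2 * Complex.cos ((Real.pi : ℂ) / 3) := by
      rw [Complex.two_cos, he₁, he₂, add_comm]
      congr 2; ring
    have h' : Complex.cos ((Real.pi : ℂ) / 3) = 1 / 2 := by
      have := Real.cos_pi_div_three
      have h2 := congrArg (fun t : ℝ => (t : ℂ)) this
      push_cast at h2
      exact h2
    rw [h'] at h
    linear_combination h
  have hp : e₁ * e₂ = 1 := by
    rw [he₁, he₂, ← Complex.exp_add, ← Complex.exp_zero]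
    congr 1; ring
  clear he₁ he₂
  subst hs he₃ ha hb hc
  have he : e₂ ^ 2 - e₂ + 1 = 0 := by linear_combination -hp
  have he' : (1 - e₂) ^ 2 - (1 - e₂) + 1 = 0 := by linear_combination -hp
  intro z₁ z₂
  rw [hP, hP]
  refine ⟨aux_stmt α₁ α₂ α₃ e₂ z₁ z₂ he hne₁ hne₂ u v hu hv, ?_⟩
  have := aux_stmt α₁ α₂ α₃ (1 - e₂) z₁ z₂ he'
  rw [sub_sub_cancel] at this
  exact this hne₂ hne₁ v u hv hu
end

section
/- Suppose the distinct complex numbers α₁, α₂, α₃ are vertices of an equilateral triangle, i.e. exactly one of α₁e₁+α₂e₂+α₃e₃ = 0 and α₁e₂+α₂e₁+α₃e₃ = 0 holds. Then 3(9c−ab) = 27c−a³ ≠ 0 and (b²−3ac)/(9c−ab) = −a/3. Moreover, −a/3 = v* if α₁e₁+α₂e₂+α₃e₃ = 0, and −a/3 = u* if α₁e₂+α₂e₁+α₃e₃ = 0. -/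
theorem aux_equi (x y z p q : ℂ) (hs : p + q = 1) (hp : p * q = 1) (hxy : x ≠ y)
    (h : x * p + y * q + z * (-1) = 0) (hD : x * q + y * p + z * (-1) ≠ 0) :
    (x + y + z) ^ 2 = 3 * (x * y + x * z + y * z) ∧
    27 * (-(x * y * z)) - (-(x + y + z)) ^ 3 ≠ 0 ∧
    -(-(x + y + z)) / 3 =
      -((x * y * (-1) + x * z * p + y * z * q) / (x * q + y * p + z * (-1))) := by
  have hz : z = x * p + y * q := by linear_combination -h
  have hq : q = 1 - p := by linear_combination hs
  subst hq
  have hp2 : p ^ 2 = p - 1 := by linear_combination -hp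
  have hp3 : p ^ 3 = -1 := by linear_combination (p + 1) * hp2
  subst hz
  refine ⟨?_, ?_, ?_⟩
  · linear_combination (x - y) ^ 2 * hp2
  · have hd : x - y ≠ 0 := sub_ne_zero.mpr hxy
    have h1 : 6 * p - 3 ≠ 0 := by
      intro h1
      have : (27 : ℂ) = 0 := by linear_combination 36 * hp2 - (6 * p - 3) * h1
      norm_num at this
    have key : 27 * (-(x * y * (x * p + y * (1 - p)))) - (-(x + y + (x * p + y * (1 - p)))) ^ 3
        = (x - y) ^ 3 * (6 * p - 3) := by
      grind
    rw [key]
    exact mul_ne_zero (pow_ne_zero _ hd) h1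
  · rw [← neg_div, div_eq_div_iff (by norm_num) hD]
    grind

theorem stmt_3 (α₁ α₂ α₃ e₁ e₂ e₃ a b c u v : ℂ)
    (he₁ : e₁ = Complex.exp (-(Real.pi : ℂ) / 3 * Complex.I))
    (he₂ : e₂ = Complex.exp ((Real.pi : ℂ) / 3 * Complex.I))
    (he₃ : e₃ = -1)
    (h12 : α₁ ≠ α₂) (h13 : α₁ ≠ α₃) (h23 : α₂ ≠ α₃)
    (ha : a = -(α₁ + α₂ + α₃))
    (hb : b = α₁ * α₂ + α₁ * α₃ + α₂ * α₃)
    (hc : c = -(α₁ * α₂ * α₃))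
    (hu : u = -((α₁ * α₂ * e₃ + α₁ * α₃ * e₂ + α₂ * α₃ * e₁) /
      (α₁ * e₁ + α₂ * e₂ + α₃ * e₃)))
    (hv : v = -((α₁ * α₂ * e₃ + α₁ * α₃ * e₁ + α₂ * α₃ * e₂) /
      (α₁ * e₂ + α₂ * e₁ + α₃ * e₃)))
    (hequi : Xor' (α₁ * e₁ + α₂ * e₂ + α₃ * e₃ = 0)
      (α₁ * e₂ + α₂ * e₁ + α₃ * e₃ = 0)) :
    3 * (9 * c - a * b) = 27 * c - a ^ 3 ∧
    27 * c - a ^ 3 ≠ 0 ∧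
    (b ^ 2 - 3 * a * c) / (9 * c - a * b) = -a / 3 ∧
    (α₁ * e₁ + α₂ * e₂ + α₃ * e₃ = 0 → -a / 3 = v) ∧
    (α₁ * e₂ + α₂ * e₁ + α₃ * e₃ = 0 → -a / 3 = u) := by
  have hs : e₁ + e₂ = 1 := by
    have h := Complex.two_cos ((Real.pi : ℂ) / 3)
    have hc3 : Complex.cos ((Real.pi : ℂ) / 3) = 1 / 2 := by
      have := congrArg (fun t : ℝ => (t : ℂ)) Real.cos_pi_div_three
      push_cast at this
      exact this
    rw [hc3] at h
    rw [he₁, he₂, neg_div]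
    linear_combination -h
  have hp : e₁ * e₂ = 1 := by
    rw [he₁, he₂, ← Complex.exp_add, neg_div, neg_mul, neg_add_cancel, Complex.exp_zero]
  clear he₁ he₂
  subst he₃
  have main : (α₁ + α₂ + α₃) ^ 2 = 3 * (α₁ * α₂ + α₁ * α₃ + α₂ * α₃) ∧
      27 * (-(α₁ * α₂ * α₃)) - (-(α₁ + α₂ + α₃)) ^ 3 ≠ 0 := by
    rcases hequi with ⟨h1, h2⟩ | ⟨h1, h2⟩
    · obtain ⟨k1, k2, -⟩ := aux_equi α₁ α₂ α₃ e₁ e₂ hs hp h12 h1 h2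
      exact ⟨k1, k2⟩
    · obtain ⟨k1, k2, -⟩ := aux_equi α₁ α₂ α₃ e₂ e₁ (by rw [add_comm, hs])
        (by rw [mul_comm, hp]) h12 h1 h2
      exact ⟨k1, k2⟩
  obtain ⟨k1, k2⟩ := main
  rw [← hc, ← ha] at k2
  have k3 : a ^ 2 = 3 * b := by rw [ha, hb, ← k1]; ring
  have k4 : 3 * (9 * c - a * b) = 27 * c - a ^ 3 := by linear_combination a * k3
  have k5 : 9 * c - a * b ≠ 0 := by
    intro h
    apply k2
    rw [← k4, h, mul_zero]
  refine ⟨k4, k2, ?_, ?_, ?_⟩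
  · rw [div_eq_div_iff k5 (by norm_num)]
    linear_combination -b * k3
  · intro h
    have hD : α₁ * e₂ + α₂ * e₁ + α₃ * (-1) ≠ 0 := by
      rcases hequi with ⟨h1, h2⟩ | ⟨h1, h2⟩
      · exact h2
      · exact absurd h h2
    rw [hv, ha]
    exact (aux_equi α₁ α₂ α₃ e₁ e₂ hs hp h12 h hD).2.2
  · intro h
    have hD : α₁ * e₁ + α₂ * e₂ + α₃ * (-1) ≠ 0 := by
      rcases hequi with ⟨h1, h2⟩ | ⟨h1, h2⟩
      · exact absurd h h2
      · exact h2
    rw [hu, ha]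
    exact (aux_equi α₁ α₂ α₃ e₂ e₁ (by rw [add_comm, hs])
        (by rw [mul_comm, hp]) h12 h hD).2.2
end

section
/- If α₁, α₂, α₃ are not vertices of an equilateral triangle, then u* and v* are precisely the two (distinct) roots of the quadratic (a²−3b)t² + (ab−9c)t + (b²−3ac) = 0; that is, (a²−3b)u*² + (ab−9c)u* + (b²−3ac) = 0, (a²−3b)v*² + (ab−9c)v* + (b²−3ac) = 0, a²−3b ≠ 0, and u* ≠ v*. -/
theorem stmt_4 (α₁ α₂ α₃ e₁ e₂ e₃ a b c u v : ℂ)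
    (he₁ : e₁ = Complex.exp (-(Real.pi : ℂ) / 3 * Complex.I))
    (he₂ : e₂ = Complex.exp ((Real.pi : ℂ) / 3 * Complex.I))
    (he₃ : e₃ = -1)
    (h12 : α₁ ≠ α₂) (h13 : α₁ ≠ α₃) (h23 : α₂ ≠ α₃)
    (ha : a = -(α₁ + α₂ + α₃))
    (hb : b = α₁ * α₂ + α₁ * α₃ + α₂ * α₃)
    (hc : c = -(α₁ * α₂ * α₃))
    (hu : u = -((α₁ * α₂ * e₃ + α₁ * α₃ * e₂ + α₂ * α₃ * e₁) /
      (α₁ * e₁ + α₂ * e₂ + α₃ * e₃)))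
    (hv : v = -((α₁ * α₂ * e₃ + α₁ * α₃ * e₁ + α₂ * α₃ * e₂) /
      (α₁ * e₂ + α₂ * e₁ + α₃ * e₃)))
    (hne₁ : α₁ * e₁ + α₂ * e₂ + α₃ * e₃ ≠ 0)
    (hne₂ : α₁ * e₂ + α₂ * e₁ + α₃ * e₃ ≠ 0) :
    (a ^ 2 - 3 * b) * u ^ 2 + (a * b - 9 * c) * u + (b ^ 2 - 3 * a * c) = 0 ∧
    (a ^ 2 - 3 * b) * v ^ 2 + (a * b - 9 * c) * v + (b ^ 2 - 3 * a * c) = 0 ∧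
    a ^ 2 - 3 * b ≠ 0 ∧
    u ≠ v := by
  have hmul : e₁ * e₂ = 1 := by
    rw [he₁, he₂, ← Complex.exp_add, ← Complex.exp_zero]
    congr 1
    ring
  have hsum : e₁ + e₂ = 1 := by
    have h := Complex.two_cos ((Real.pi : ℂ) / 3)
    have h2 : Complex.cos ((Real.pi : ℂ) / 3) = 1 / 2 := by
      have := congrArg (fun x : ℝ => (x : ℂ)) Real.cos_pi_div_three
      push_cast at this
      exact this
    rw [h2] at h
    have h3 : -(Real.pi : ℂ) / 3 * Complex.I = -((Real.pi : ℂ) / 3) * Complex.I := by ring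
    rw [he₁, he₂, h3]
    linear_combination -h
  have h1 : e₁ = 1 - e₂ := by linear_combination hsum
  clear he₁ he₂
  have hw : e₂ ^ 2 = e₂ - 1 := by rw [h1] at hmul; linear_combination -hmul
  have hd : e₁ - e₂ ≠ 0 := by
    intro h
    have : (e₁ - e₂) ^ 2 = -3 := by rw [h1]; linear_combination 4 * hw
    rw [h] at this
    norm_num at this
  set D₁ := α₁ * e₁ + α₂ * e₂ + α₃ * e₃ with hD₁
  set D₂ := α₁ * e₂ + α₂ * e₁ + α₃ * e₃ with hD₂
  set N₁ := α₁ * α₂ * e₃ + α₁ * α₃ * e₂ + α₂ * α₃ * e₁ with hN₁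
  set N₂ := α₁ * α₂ * e₃ + α₁ * α₃ * e₁ + α₂ * α₃ * e₂ with hN₂
  have hA : a ^ 2 - 3 * b = D₁ * D₂ := by
    rw [ha, hb, hD₁, hD₂, h1, he₃]; linear_combination (α₁ - α₂) ^ 2 * hw
  have hB : a * b - 9 * c = D₁ * N₂ + D₂ * N₁ := by
    rw [ha, hb, hc, hD₁, hD₂, hN₁, hN₂, h1, he₃]; linear_combination -2 * α₃ * (α₁ - α₂) ^ 2 * hw
  have hC : b ^ 2 - 3 * a * c = N₁ * N₂ := by
    rw [ha, hb, hc, hN₁, hN₂, h1, he₃]; linear_combination (α₁ * α₃ - α₂ * α₃) ^ 2 * hw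
  have hV : N₁ * D₂ - N₂ * D₁ = (e₁ - e₂) * ((α₁ - α₂) * (α₁ - α₃) * (α₂ - α₃)) := by
    rw [hD₁, hD₂, hN₁, hN₂, h1, he₃]; ring
  have hu' : D₁ * u + N₁ = 0 := by rw [hu]; field_simp; ring
  have hv' : D₂ * v + N₂ = 0 := by rw [hv]; field_simp; ring
  rw [hA, hB, hC]
  refine ⟨?_, ?_, mul_ne_zero hne₁ hne₂, ?_⟩
  · linear_combination (D₂ * u + N₂) * hu'
  · linear_combination (D₁ * v + N₁) * hv'
  · intro huv
    have h0 : (e₁ - e₂) * ((α₁ - α₂) * (α₁ - α₃) * (α₂ - α₃)) = 0 := by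
      rw [← hV]
      rw [huv] at hu'
      linear_combination D₂ * hu' - D₁ * hv'
    exact mul_ne_zero hd (mul_ne_zero (mul_ne_zero (sub_ne_zero.2 h12) (sub_ne_zero.2 h13))
      (sub_ne_zero.2 h23)) h0
end

section
/- If α₁, α₂, α₃ are not vertices of an equilateral triangle, then P(z₁, u*, v*) = 0 for every z₁ ∈ ℂ. Equivalently, for every z₁ ∈ ℂ with 3z₁u* + a(z₁+u*) + b ≠ 0 one has F(z₁, u*) = v*, and for every z₁ ∈ ℂ with 3z₁v* + a(z₁+v*) + b ≠ 0 one has F(z₁, v*) = u*. -/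
theorem stmt_5 (α₁ α₂ α₃ e₁ e₂ e₃ a b c u v : ℂ)
    (P : ℂ → ℂ → ℂ → ℂ) (F : ℂ → ℂ → ℂ)
    (he₁ : e₁ = Complex.exp (-(Real.pi : ℂ) / 3 * Complex.I))
    (he₂ : e₂ = Complex.exp ((Real.pi : ℂ) / 3 * Complex.I))
    (he₃ : e₃ = -1)
    (h12 : α₁ ≠ α₂) (h13 : α₁ ≠ α₃) (h23 : α₂ ≠ α₃)
    (ha : a = -(α₁ + α₂ + α₃))
    (hb : b = α₁ * α₂ + α₁ * α₃ + α₂ * α₃)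
    (hc : c = -(α₁ * α₂ * α₃))
    (hP : ∀ z₁ z₂ z₃, P z₁ z₂ z₃ =
      z₁ * z₂ * z₃ + a / 3 * (z₁ * z₂ + z₂ * z₃ + z₃ * z₁) + b / 3 * (z₁ + z₂ + z₃) + c)
    (hF : ∀ z₁ z₂, F z₁ z₂ =
      -((a * z₁ * z₂ + b * (z₁ + z₂) + 3 * c) / (3 * z₁ * z₂ + a * (z₁ + z₂) + b)))
    (hu : u = -((α₁ * α₂ * e₃ + α₁ * α₃ * e₂ + α₂ * α₃ * e₁) /
      (α₁ * e₁ + α₂ * e₂ + α₃ * e₃)))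
    (hv : v = -((α₁ * α₂ * e₃ + α₁ * α₃ * e₁ + α₂ * α₃ * e₂) /
      (α₁ * e₂ + α₂ * e₁ + α₃ * e₃)))
    (hne₁ : α₁ * e₁ + α₂ * e₂ + α₃ * e₃ ≠ 0)
    (hne₂ : α₁ * e₂ + α₂ * e₁ + α₃ * e₃ ≠ 0) :
    (∀ z₁ : ℂ, P z₁ u v = 0) ∧
    (∀ z₁ : ℂ, 3 * z₁ * u + a * (z₁ + u) + b ≠ 0 → F z₁ u = v) ∧
    (∀ z₁ : ℂ, 3 * z₁ * v + a * (z₁ + v) + b ≠ 0 → F z₁ v = u) := by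
  have hs : Complex.exp ((Real.pi : ℂ) / 3 * Complex.I) = 1 / 2 + (√3 / 2 : ℝ) * Complex.I := by
    rw [Complex.exp_mul_I]
    have h1 : (Real.pi : ℂ) / 3 = ((Real.pi / 3 : ℝ) : ℂ) := by push_cast; ring
    rw [h1, ← Complex.ofReal_cos, ← Complex.ofReal_sin, Real.cos_pi_div_three,
      Real.sin_pi_div_three]
    push_cast; ring
  have hs' : Complex.exp (-(Real.pi : ℂ) / 3 * Complex.I) = 1 / 2 - (√3 / 2 : ℝ) * Complex.I := by
    rw [Complex.exp_mul_I]
    have h1 : -(Real.pi : ℂ) / 3 = ((-(Real.pi / 3) : ℝ) : ℂ) := by push_cast; ring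
    rw [h1, ← Complex.ofReal_cos, ← Complex.ofReal_sin, Real.cos_neg, Real.sin_neg,
      Real.cos_pi_div_three, Real.sin_pi_div_three]
    push_cast; ring
  have h1 : e₁ = 1 - e₂ := by rw [he₁, he₂, hs, hs']; ring
  have h2 : e₂ ^ 2 - e₂ + 1 = 0 := by
    have h3 : ((√3 : ℝ) : ℂ) ^ 2 = 3 := by
      rw [← Complex.ofReal_pow, Real.sq_sqrt (by norm_num)]; norm_num
    rw [he₂, hs]; push_cast
    linear_combination (1 / 4 * Complex.I ^ 2) * h3 + 3 / 4 * Complex.I_sq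
  clear hs hs' he₁ he₂
  have hU : u * (α₁ * e₁ + α₂ * e₂ + α₃ * e₃) =
      -(α₁ * α₂ * e₃ + α₁ * α₃ * e₂ + α₂ * α₃ * e₁) := by
    rw [hu, neg_mul, div_mul_cancel₀ _ hne₁]
  have hV : v * (α₁ * e₂ + α₂ * e₁ + α₃ * e₃) =
      -(α₁ * α₂ * e₃ + α₁ * α₃ * e₁ + α₂ * α₃ * e₂) := by
    rw [hv, neg_mul, div_mul_cancel₀ _ hne₂]
  clear hu hv
  have hne := mul_ne_zero hne₁ hne₂
  obtain ⟨D, hD⟩ : ∃ D, D = α₁ * e₁ + α₂ * e₂ + α₃ * e₃ := ⟨_, rfl⟩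
  obtain ⟨E, hE⟩ : ∃ E, E = α₁ * e₂ + α₂ * e₁ + α₃ * e₃ := ⟨_, rfl⟩
  obtain ⟨M, hM⟩ : ∃ M, M = α₁ * α₂ * e₃ + α₁ * α₃ * e₂ + α₂ * α₃ * e₁ := ⟨_, rfl⟩
  obtain ⟨N, hN⟩ : ∃ N, N = α₁ * α₂ * e₃ + α₁ * α₃ * e₁ + α₂ * α₃ * e₂ := ⟨_, rfl⟩
  rw [← hD, ← hE] at hne
  rw [← hD, ← hM] at hU
  rw [← hE, ← hN] at hV
  have k1 : 3 * (M * N) - a * (M * E + N * D) + b * (D * E) = 0 := by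
    rw [hM, hN, hD, hE, ha, hb, h1, he₃]
    linear_combination ((α₁ - α₂) ^ 2 * (-3 * α₃ ^ 2 + 2 * (α₁ + α₂ + α₃) * α₃
      - (α₁ * α₂ + α₁ * α₃ + α₂ * α₃))) * h2
  have k2 : a * (M * N) - b * (M * E + N * D) + 3 * c * (D * E) = 0 := by
    rw [hM, hN, hD, hE, ha, hb, hc, h1, he₃]
    linear_combination ((α₁ - α₂) ^ 2 * ((α₁ + α₂ + α₃) * α₃ ^ 2
      - 2 * (α₁ * α₂ + α₁ * α₃ + α₂ * α₃) * α₃ + 3 * (α₁ * α₂ * α₃))) * h2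
  have q1 : 3 * (u * v) + a * (u + v) + b = 0 := by
    apply (mul_eq_zero.mp _).resolve_left hne
    linear_combination k1 + (3 * v * E + a * E) * hU + (-3 * M + a * D) * hV
  have q2 : a * (u * v) + b * (u + v) + 3 * c = 0 := by
    apply (mul_eq_zero.mp _).resolve_left hne
    linear_combination k2 + (a * v * E + b * E) * hU + (-a * M + b * D) * hV
  refine ⟨fun z => ?_, fun z hz => ?_, fun z hz => ?_⟩
  · rw [hP]
    linear_combination z / 3 * q1 + 1 / 3 * q2
  · rw [hF, ← neg_div, div_eq_iff hz]
    linear_combination -z * q1 - q2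
  · rw [hF, ← neg_div, div_eq_iff hz]
    linear_combination -z * q1 - q2
end

section
/- Let u₁, u₂ ∈ ℂ be nonzero. Assume that the denominators u₁(α₁e₁+α₂e₂+α₃e₃)+(α₁e₂+α₂e₁+α₃e₃), u₂(α₁e₁+α₂e₂+α₃e₃)+(α₁e₂+α₂e₁+α₃e₃), and (−1/(u₁u₂))(α₁e₁+α₂e₂+α₃e₃)+(α₁e₂+α₂e₁+α₃e₃) are all nonzero (so W(u₁), W(u₂), W(−1/(u₁u₂)) are finite), and that 3W(u₁)W(u₂) + a(W(u₁)+W(u₂)) + b ≠ 0 (so F(W(u₁),W(u₂)) is defined). Then F(W(u₁), W(u₂)) = W(−1/(u₁u₂)). -/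
theorem aux_id (x y z e P Q R S a b c K : ℂ) (h : e ^ 2 = e - 1)
    (ha : a = -(x + y + z)) (hb : b = x * y + x * z + y * z) (hc : c = -(x * y * z))
    (hP : P = x * y * (-1) + x * z * (1 - e) + y * z * e)
    (hQ : Q = x * y * (-1) + x * z * e + y * z * (1 - e))
    (hR : R = x * e + y * (1 - e) + z * (-1))
    (hS : S = x * (1 - e) + y * e + z * (-1))
    (hK : K = (1 - 2 * e) * (x - y) * (y - z) * (x - z)) :
    (a * P * P - 2 * b * P * R + 3 * c * R * R = K * Q ∧
     a * P * Q - b * (P * S + Q * R) + 3 * c * R * S = 0 ∧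
     a * Q * Q - 2 * b * Q * S + 3 * c * S * S = - K * P) ∧
    (3 * P * P - 2 * a * P * R + b * R * R = K * S ∧
     3 * P * Q - a * (P * S + Q * R) + b * R * S = 0 ∧
     3 * Q * Q - 2 * a * Q * S + b * S * S = - K * R) := by
  subst ha hb hc hP hQ hR hS hK
  refine ⟨⟨?_, ?_, ?_⟩, ?_, ?_, ?_⟩ <;> grind

theorem aux_e : Complex.exp (-(Real.pi : ℂ) / 3 * Complex.I) ^ 2
      = Complex.exp (-(Real.pi : ℂ) / 3 * Complex.I) - 1 ∧
    Complex.exp ((Real.pi : ℂ) / 3 * Complex.I)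
      = 1 - Complex.exp (-(Real.pi : ℂ) / 3 * Complex.I) := by
  have h3 : ((Real.sqrt 3 : ℝ) : ℂ) ^ 2 = 3 := by
    rw [← Complex.ofReal_pow, Real.sq_sqrt (by norm_num)]; norm_num
  have hp : Complex.exp ((Real.pi : ℂ) / 3 * Complex.I)
      = 1 / 2 + (Real.sqrt 3 : ℝ) / 2 * Complex.I := by
    have : (Real.pi : ℂ) / 3 = ((Real.pi / 3 : ℝ) : ℂ) := by push_cast; rfl
    rw [Complex.exp_mul_I, this, ← Complex.ofReal_cos, ← Complex.ofReal_sin,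
      Real.cos_pi_div_three, Real.sin_pi_div_three]
    push_cast; rfl
  have hm : Complex.exp (-(Real.pi : ℂ) / 3 * Complex.I)
      = 1 / 2 - (Real.sqrt 3 : ℝ) / 2 * Complex.I := by
    have : -(Real.pi : ℂ) / 3 = ((-(Real.pi / 3) : ℝ) : ℂ) := by push_cast; ring
    rw [Complex.exp_mul_I, this, ← Complex.ofReal_cos, ← Complex.ofReal_sin,
      Real.cos_neg, Real.sin_neg, Real.cos_pi_div_three, Real.sin_pi_div_three]
    push_cast; ring
  rw [hp, hm]
  constructor
  · linear_combination (1 / 4 * Complex.I ^ 2) * h3 + 3 / 4 * Complex.I_sq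
  · ring

theorem aux_final (P Q R S a b c K u v : ℂ) (hu : u ≠ 0) (hv : v ≠ 0)
    (h1 : a * P * P - 2 * b * P * R + 3 * c * R * R = K * Q)
    (h2 : a * P * Q - b * (P * S + Q * R) + 3 * c * R * S = 0)
    (h3 : a * Q * Q - 2 * b * Q * S + 3 * c * S * S = - K * P)
    (h4 : 3 * P * P - 2 * a * P * R + b * R * R = K * S)
    (h5 : 3 * P * Q - a * (P * S + Q * R) + b * R * S = 0)
    (h6 : 3 * Q * Q - 2 * a * Q * S + b * S * S = - K * R)
    (X Y : ℂ) (d1 : u * R + S ≠ 0) (d2 : v * R + S ≠ 0)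
    (d3 : (-(1 / (u * v))) * R + S ≠ 0)
    (hX : X = -((u * P + Q) / (u * R + S))) (hY : Y = -((v * P + Q) / (v * R + S)))
    (hd : 3 * X * Y + a * (X + Y) + b ≠ 0) :
    -((a * X * Y + b * (X + Y) + 3 * c) / (3 * X * Y + a * (X + Y) + b))
      = -(((-(1 / (u * v))) * P + Q) / ((-(1 / (u * v))) * R + S)) := by
  have eX : X * (u * R + S) = -(u * P + Q) := by rw [hX]; field_simp
  have eY : Y * (v * R + S) = -(v * P + Q) := by rw [hY]; field_simp
  have hnum : (a * X * Y + b * (X + Y) + 3 * c) * ((u * R + S) * (v * R + S))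
      = K * (u * v * Q - P) := by
    linear_combination (u * v) * h1 + (u + v) * h2 + h3 + (a * Y * (v * R + S) + b * (v * R + S)) * eX
      + (-a * (u * P + Q) + b * (u * R + S)) * eY
  have hden : (3 * X * Y + a * (X + Y) + b) * ((u * R + S) * (v * R + S))
      = K * (u * v * S - R) := by
    linear_combination (u * v) * h4 + (u + v) * h5 + h6 + (3 * Y * (v * R + S) + a * (v * R + S)) * eX
      + (-3 * (u * P + Q) + a * (u * R + S)) * eY
  have eN : (-(1 / (u * v))) * P + Q = (u * v * Q - P) / (u * v) := by field_simp; ring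
  have eD : (-(1 / (u * v))) * R + S = (u * v * S - R) / (u * v) := by field_simp; ring
  rw [neg_inj, div_eq_div_iff hd d3, eN, eD]
  have hm : (u * R + S) * (v * R + S) ≠ 0 := mul_ne_zero d1 d2
  apply mul_right_cancel₀ hm
  linear_combination ((u * v * S - R) / (u * v)) * hnum - ((u * v * Q - P) / (u * v)) * hden

theorem stmt_6 (α₁ α₂ α₃ e₁ e₂ e₃ a b c : ℂ)
    (F : ℂ → ℂ → ℂ) (W : ℂ → ℂ)
    (he₁ : e₁ = Complex.exp (-(Real.pi : ℂ) / 3 * Complex.I))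
    (he₂ : e₂ = Complex.exp ((Real.pi : ℂ) / 3 * Complex.I))
    (he₃ : e₃ = -1)
    (h12 : α₁ ≠ α₂) (h13 : α₁ ≠ α₃) (h23 : α₂ ≠ α₃)
    (ha : a = -(α₁ + α₂ + α₃))
    (hb : b = α₁ * α₂ + α₁ * α₃ + α₂ * α₃)
    (hc : c = -(α₁ * α₂ * α₃))
    (hF : ∀ z₁ z₂, F z₁ z₂ =
      -((a * z₁ * z₂ + b * (z₁ + z₂) + 3 * c) / (3 * z₁ * z₂ + a * (z₁ + z₂) + b)))
    (hW : ∀ z, W z =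
      -((z * (α₁ * α₂ * e₃ + α₁ * α₃ * e₂ + α₂ * α₃ * e₁) +
          (α₁ * α₂ * e₃ + α₁ * α₃ * e₁ + α₂ * α₃ * e₂)) /
        (z * (α₁ * e₁ + α₂ * e₂ + α₃ * e₃) + (α₁ * e₂ + α₂ * e₁ + α₃ * e₃))))
    (u₁ u₂ : ℂ) (hu₁ : u₁ ≠ 0) (hu₂ : u₂ ≠ 0)
    (hd₁ : u₁ * (α₁ * e₁ + α₂ * e₂ + α₃ * e₃) + (α₁ * e₂ + α₂ * e₁ + α₃ * e₃) ≠ 0)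
    (hd₂ : u₂ * (α₁ * e₁ + α₂ * e₂ + α₃ * e₃) + (α₁ * e₂ + α₂ * e₁ + α₃ * e₃) ≠ 0)
    (hd₃ : (-(1 / (u₁ * u₂))) * (α₁ * e₁ + α₂ * e₂ + α₃ * e₃) +
      (α₁ * e₂ + α₂ * e₁ + α₃ * e₃) ≠ 0)
    (hdF : 3 * (W u₁) * (W u₂) + a * (W u₁ + W u₂) + b ≠ 0) :
    F (W u₁) (W u₂) = W (-(1 / (u₁ * u₂))) := by
  obtain ⟨q1, q2⟩ := aux_e
  rw [← he₁] at q1 q2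
  rw [← he₂] at q2
  obtain ⟨⟨h1, h2, h3⟩, h4, h5, h6⟩ := aux_id α₁ α₂ α₃ e₁ _ _ _ _ a b c _ q1 ha hb hc rfl rfl rfl rfl rfl
  rw [← he₃, ← q2] at h1 h2 h3 h4 h5 h6
  rw [hF, hW (-(1 / (u₁ * u₂)))]
  exact aux_final _ _ _ _ a b c _ u₁ u₂ hu₁ hu₂ h1 h2 h3 h4 h5 h6 _ _ hd₁ hd₂ hd₃ (hW u₁) (hW u₂) hdF
end

section
/- Suppose α₁, α₂, α₃ are not vertices of an equilateral triangle, and let z₁, z₂, z₃ ∈ ℂ with zₖ ≠ u* and zₖ ≠ v* for each k = 1, 2, 3. Then P(z₁, z₂, z₃) = 0 if and only if W⁻¹(z₁)·W⁻¹(z₂)·W⁻¹(z₃) = −1, where W⁻¹(z) := −((α₁e₂+α₂e₁+α₃e₃)/(α₁e₁+α₂e₂+α₃e₃))·((z−v*)/(z−u*)). -/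
set_option maxRecDepth 10000 in
set_option maxHeartbeats 1000000 in
theorem stmt_7 (α₁ α₂ α₃ e₁ e₂ e₃ a b c u v : ℂ)
    (P : ℂ → ℂ → ℂ → ℂ) (Wi : ℂ → ℂ)
    (he₁ : e₁ = Complex.exp (-(Real.pi : ℂ) / 3 * Complex.I))
    (he₂ : e₂ = Complex.exp ((Real.pi : ℂ) / 3 * Complex.I))
    (he₃ : e₃ = -1)
    (h12 : α₁ ≠ α₂) (h13 : α₁ ≠ α₃) (h23 : α₂ ≠ α₃)
    (ha : a = -(α₁ + α₂ + α₃))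
    (hb : b = α₁ * α₂ + α₁ * α₃ + α₂ * α₃)
    (hc : c = -(α₁ * α₂ * α₃))
    (hP : ∀ z₁ z₂ z₃, P z₁ z₂ z₃ =
      z₁ * z₂ * z₃ + a / 3 * (z₁ * z₂ + z₂ * z₃ + z₃ * z₁) + b / 3 * (z₁ + z₂ + z₃) + c)
    (hu : u = -((α₁ * α₂ * e₃ + α₁ * α₃ * e₂ + α₂ * α₃ * e₁) /
      (α₁ * e₁ + α₂ * e₂ + α₃ * e₃)))
    (hv : v = -((α₁ * α₂ * e₃ + α₁ * α₃ * e₁ + α₂ * α₃ * e₂) /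
      (α₁ * e₂ + α₂ * e₁ + α₃ * e₃)))
    (hne₁ : α₁ * e₁ + α₂ * e₂ + α₃ * e₃ ≠ 0)
    (hne₂ : α₁ * e₂ + α₂ * e₁ + α₃ * e₃ ≠ 0)
    (hWi : ∀ z, Wi z =
      -((α₁ * e₂ + α₂ * e₁ + α₃ * e₃) / (α₁ * e₁ + α₂ * e₂ + α₃ * e₃)) *
        ((z - v) / (z - u)))
    (z₁ z₂ z₃ : ℂ)
    (h₁u : z₁ ≠ u) (h₁v : z₁ ≠ v)
    (h₂u : z₂ ≠ u) (h₂v : z₂ ≠ v)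
    (h₃u : z₃ ≠ u) (h₃v : z₃ ≠ v) :
    P z₁ z₂ z₃ = 0 ↔ Wi z₁ * Wi z₂ * Wi z₃ = -1 := by
  have hs : e₁ + e₂ = 1 := by
    have h := Complex.two_cos ((Real.pi : ℂ) / 3)
    have h2 : Complex.cos ((Real.pi : ℂ) / 3) = 1 / 2 := by
      have := Real.cos_pi_div_three
      rw [← Complex.ofReal_inj] at this
      push_cast at this
      exact this
    rw [h2, ← neg_div, ← he₁, ← he₂] at h
    linear_combination -h
  have hp : e₁ * e₂ = 1 := by
    rw [he₁, he₂, ← Complex.exp_add]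
    ring_nf
    simp
  clear he₁ he₂
  obtain rfl : e₁ = 1 - e₂ := by linear_combination hs
  subst he₃
  have hq : e₂ ^ 2 = e₂ - 1 := by linear_combination -hp
  have hw : 2 * e₂ - 1 ≠ 0 := by
    intro h
    have : (-3 : ℂ) = 0 := by linear_combination (2 * e₂ - 1) * h - 4 * hq
    norm_num at this
  set D1 := α₁ * (1 - e₂) + α₂ * e₂ + α₃ * (-1) with hD1
  set D2 := α₁ * e₂ + α₂ * (1 - e₂) + α₃ * (-1) with hD2
  have hL : ∀ z, D1 * (z - u) = D1 * z + (α₁ * α₂ * (-1) + α₁ * α₃ * e₂ + α₂ * α₃ * (1 - e₂)) := by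
    intro z; rw [hu]; field_simp; ring
  have hM : ∀ z, D2 * (z - v) = D2 * z + (α₁ * α₂ * (-1) + α₁ * α₃ * (1 - e₂) + α₂ * α₃ * e₂) := by
    intro z; rw [hv]; field_simp; ring
  have hW : ∀ z, Wi z = -(D2 * (z - v)) / (D1 * (z - u)) := by
    intro z; rw [hWi, neg_mul, div_mul_div_comm, neg_div]
  have hL0 : ∀ z, z ≠ u → D1 * (z - u) ≠ 0 := fun z hz => mul_ne_zero hne₁ (sub_ne_zero.2 hz)
  have key : (D2 * (z₁ - v)) * (D2 * (z₂ - v)) * (D2 * (z₃ - v))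
      - (D1 * (z₁ - u)) * (D1 * (z₂ - u)) * (D1 * (z₃ - u))
      = 3 * (2 * e₂ - 1) * ((α₁ - α₂) * (α₁ - α₃) * (α₂ - α₃)) * P z₁ z₂ z₃ := by
    rw [hL, hL, hL, hM, hM, hM, hP, ha, hb, hc, hD1, hD2]
    have hq3 : e₂ ^ 3 = -1 := by linear_combination (e₂ + 1) * hq
    ring_nf
    simp only [hq, hq3]
    ring
  have hK : 3 * (2 * e₂ - 1) * ((α₁ - α₂) * (α₁ - α₃) * (α₂ - α₃)) ≠ 0 :=
    mul_ne_zero (mul_ne_zero (by norm_num) hw)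
      (mul_ne_zero (mul_ne_zero (sub_ne_zero.2 h12) (sub_ne_zero.2 h13)) (sub_ne_zero.2 h23))
  have h1 := hL0 z₁ h₁u
  have h2 := hL0 z₂ h₂u
  have h3 := hL0 z₃ h₃u
  rw [hW, hW, hW, div_mul_div_comm, div_mul_div_comm, div_eq_iff (mul_ne_zero (mul_ne_zero h1 h2) h3)]
  constructor
  · intro h
    rw [h, mul_zero] at key
    linear_combination -key
  · intro h
    apply (mul_eq_zero.1 (key.symm.trans _)).resolve_left hK
    linear_combination -h
end

section
/- There is no z ∈ ℂ satisfying simultaneously P₁(z,z) = 0 and P₂(z,z) = 0; equivalently, the polynomials 3z² + 2az + b and az² + 2bz + 3c have no common complex root. -/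
theorem stmt_8 (α₁ α₂ α₃ a b c : ℂ) (P₁ P₂ : ℂ → ℂ → ℂ)
    (h12 : α₁ ≠ α₂) (h13 : α₁ ≠ α₃) (h23 : α₂ ≠ α₃)
    (ha : a = -(α₁ + α₂ + α₃))
    (hb : b = α₁ * α₂ + α₁ * α₃ + α₂ * α₃)
    (hc : c = -(α₁ * α₂ * α₃))
    (hP₁ : ∀ z₁ z₂, P₁ z₁ z₂ = z₁ * z₂ + a / 3 * (z₁ + z₂) + b / 3)
    (hP₂ : ∀ z₁ z₂, P₂ z₁ z₂ = a / 3 * (z₁ * z₂) + b / 3 * (z₁ + z₂) + c) :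
    (∀ z : ℂ, ¬(P₁ z z = 0 ∧ P₂ z z = 0)) ∧
    (∀ z : ℂ, ¬(3 * z ^ 2 + 2 * a * z + b = 0 ∧ a * z ^ 2 + 2 * b * z + 3 * c = 0)) := by
  have key : ∀ z : ℂ, ¬(3 * z ^ 2 + 2 * a * z + b = 0 ∧ a * z ^ 2 + 2 * b * z + 3 * c = 0) := by
    rintro z ⟨h1, h2⟩
    subst ha hb hc
    have hp : (z - α₁) * (z - α₂) * (z - α₃) = 0 := by
      linear_combination (z / 3) * h1 + (1 / 3) * h2
    have n12 := sub_ne_zero.mpr h12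
    have n13 := sub_ne_zero.mpr h13
    have n23 := sub_ne_zero.mpr h23
    rcases mul_eq_zero.mp hp with h | h
    · rcases mul_eq_zero.mp h with h | h
      · obtain rfl := sub_eq_zero.mp h
        exact mul_ne_zero n12 n13 (by linear_combination h1)
      · obtain rfl := sub_eq_zero.mp h
        exact mul_ne_zero n12 n23 (by linear_combination -h1)
    · obtain rfl := sub_eq_zero.mp h
      exact mul_ne_zero n13 n23 (by linear_combination h1)
  refine ⟨?_, key⟩
  rintro z ⟨h1, h2⟩
  rw [hP₁] at h1
  rw [hP₂] at h2
  exact key z ⟨by linear_combination 3 * h1, by linear_combination 3 * h2⟩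
end

section
/- If α₁, α₂, α₃ are not vertices of an equilateral triangle, then the set of pairs (z₁, z₂) ∈ ℂ² satisfying the system P₁(z₁,z₂) = 0 and P₂(z₁,z₂) = 0 is exactly {(u*, v*), (v*, u*)}. -/
theorem stmt_9 (α₁ α₂ α₃ e₁ e₂ e₃ a b c u v : ℂ) (P₁ P₂ : ℂ → ℂ → ℂ)
    (he₁ : e₁ = Complex.exp (-(Real.pi : ℂ) / 3 * Complex.I))
    (he₂ : e₂ = Complex.exp ((Real.pi : ℂ) / 3 * Complex.I))
    (he₃ : e₃ = -1)
    (h12 : α₁ ≠ α₂) (h13 : α₁ ≠ α₃) (h23 : α₂ ≠ α₃)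
    (ha : a = -(α₁ + α₂ + α₃))
    (hb : b = α₁ * α₂ + α₁ * α₃ + α₂ * α₃)
    (hc : c = -(α₁ * α₂ * α₃))
    (hP₁ : ∀ z₁ z₂, P₁ z₁ z₂ = z₁ * z₂ + a / 3 * (z₁ + z₂) + b / 3)
    (hP₂ : ∀ z₁ z₂, P₂ z₁ z₂ = a / 3 * (z₁ * z₂) + b / 3 * (z₁ + z₂) + c)
    (hu : u = -((α₁ * α₂ * e₃ + α₁ * α₃ * e₂ + α₂ * α₃ * e₁) /
      (α₁ * e₁ + α₂ * e₂ + α₃ * e₃)))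
    (hv : v = -((α₁ * α₂ * e₃ + α₁ * α₃ * e₁ + α₂ * α₃ * e₂) /
      (α₁ * e₂ + α₂ * e₁ + α₃ * e₃)))
    (hne₁ : α₁ * e₁ + α₂ * e₂ + α₃ * e₃ ≠ 0)
    (hne₂ : α₁ * e₂ + α₂ * e₁ + α₃ * e₃ ≠ 0) :
    {p : ℂ × ℂ | P₁ p.1 p.2 = 0 ∧ P₂ p.1 p.2 = 0} = {(u, v), (v, u)} := by
  have hsum : e₁ = 1 - e₂ := by
    have h1 : e₁ = (Real.cos (Real.pi/3) : ℂ) - Real.sin (Real.pi/3) * Complex.I := by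
      rw [he₁, Complex.exp_mul_I, neg_div, Complex.cos_neg, Complex.sin_neg]
      push_cast; ring
    have h2 : e₂ = (Real.cos (Real.pi/3) : ℂ) + Real.sin (Real.pi/3) * Complex.I := by
      rw [he₂, Complex.exp_mul_I]
      push_cast; ring
    rw [h1, h2, Real.cos_pi_div_three]
    push_cast; ring
  have hprod : e₁ * e₂ = 1 := by
    rw [he₁, he₂, ← Complex.exp_add]
    rw [show (-(Real.pi : ℂ) / 3 * Complex.I + (Real.pi : ℂ) / 3 * Complex.I) = 0 by ring]
    exact Complex.exp_zero
  clear he₁ he₂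
  have hw : e₂ ^ 2 = e₂ - 1 := by rw [hsum] at hprod; linear_combination -hprod
  clear hprod
  have hD : (α₁ * e₁ + α₂ * e₂ + α₃ * e₃) * (α₁ * e₂ + α₂ * e₁ + α₃ * e₃) = a ^ 2 - 3 * b := by
    rw [hsum, he₃, ha, hb]
    linear_combination (-(α₁ - α₂) ^ 2) * hw
  have hD0 : a ^ 2 - 3 * b ≠ 0 := hD ▸ mul_ne_zero hne₁ hne₂
  have hu' : u * (α₁ * e₁ + α₂ * e₂ + α₃ * e₃)
      = -(α₁ * α₂ * e₃ + α₁ * α₃ * e₂ + α₂ * α₃ * e₁) := by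
    rw [hu, neg_mul, div_mul_cancel₀ _ hne₁]
  have hv' : v * (α₁ * e₂ + α₂ * e₁ + α₃ * e₃)
      = -(α₁ * α₂ * e₃ + α₁ * α₃ * e₁ + α₂ * α₃ * e₂) := by
    rw [hv, neg_mul, div_mul_cancel₀ _ hne₂]
  clear hu hv
  have hS : (a ^ 2 - 3 * b) * (u + v) = 9 * c - a * b := by
    have : (a ^ 2 - 3 * b) * (u + v) =
      -(α₁ * α₂ * e₃ + α₁ * α₃ * e₂ + α₂ * α₃ * e₁) * (α₁ * e₂ + α₂ * e₁ + α₃ * e₃)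
      + -(α₁ * α₂ * e₃ + α₁ * α₃ * e₁ + α₂ * α₃ * e₂) * (α₁ * e₁ + α₂ * e₂ + α₃ * e₃) := by
      rw [← hD, ← hu', ← hv']; ring
    rw [this, hsum, he₃, ha, hb, hc]
    linear_combination (-2 * α₃ * (α₁ - α₂) ^ 2) * hw
  have hQ : (a ^ 2 - 3 * b) * (u * v) = b ^ 2 - 3 * a * c := by
    have : (a ^ 2 - 3 * b) * (u * v) =
      (α₁ * α₂ * e₃ + α₁ * α₃ * e₂ + α₂ * α₃ * e₁)
       * (α₁ * α₂ * e₃ + α₁ * α₃ * e₁ + α₂ * α₃ * e₂) := by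
      rw [← hD]
      linear_combination (v * (α₁ * e₂ + α₂ * e₁ + α₃ * e₃)) * hu' - (α₁ * α₂ * e₃ + α₁ * α₃ * e₂ + α₂ * α₃ * e₁) * hv'
    rw [this, hsum, he₃, ha, hb, hc]
    linear_combination (-(α₃ * (α₁ - α₂)) ^ 2) * hw
  clear hu' hv' hD ha hb hc
  have k1 : u * v + a / 3 * (u + v) + b / 3 = 0 := by
    apply mul_left_cancel₀ hD0
    linear_combination hQ + a / 3 * hS
  have k2 : a / 3 * (u * v) + b / 3 * (u + v) + c = 0 := by
    apply mul_left_cancel₀ hD0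
    linear_combination a / 3 * hQ + b / 3 * hS
  ext ⟨x, y⟩
  simp only [Set.mem_setOf_eq, hP₁, hP₂, Set.mem_insert_iff, Set.mem_singleton_iff, Prod.mk.injEq]
  constructor
  · rintro ⟨h1, h2⟩
    have hs : x + y = u + v := by
      apply mul_left_cancel₀ hD0
      linear_combination 3 * a * h1 - 9 * h2 - hS
    have hp : x * y = u * v := by
      linear_combination h1 - k1 - a / 3 * hs
    have : (x - u) * (x - v) = 0 := by
      linear_combination x * hs - hp
    rcases mul_eq_zero.mp this with h | h
    · left; exact ⟨by linear_combination h, by linear_combination hs - h⟩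
    · right; exact ⟨by linear_combination h, by linear_combination hs - h⟩
  · rintro (⟨rfl, rfl⟩ | ⟨rfl, rfl⟩)
    · exact ⟨k1, k2⟩
    · exact ⟨by linear_combination k1, by linear_combination k2⟩
end

section
/- If the distinct complex numbers α₁, α₂, α₃ are vertices of an equilateral triangle (i.e. (α₁+α₂+α₃)² = 3(α₁α₂+α₁α₃+α₂α₃), equivalently a² = 3b), then there is no pair (z₁, z₂) ∈ ℂ² satisfying the system P₁(z₁,z₂) = 0 and P₂(z₁,z₂) = 0. -/
theorem stmt_10 (α₁ α₂ α₃ a b c : ℂ) (P₁ P₂ : ℂ → ℂ → ℂ)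
    (h12 : α₁ ≠ α₂) (h13 : α₁ ≠ α₃) (h23 : α₂ ≠ α₃)
    (ha : a = -(α₁ + α₂ + α₃))
    (hb : b = α₁ * α₂ + α₁ * α₃ + α₂ * α₃)
    (hc : c = -(α₁ * α₂ * α₃))
    (hP₁ : ∀ z₁ z₂, P₁ z₁ z₂ = z₁ * z₂ + a / 3 * (z₁ + z₂) + b / 3)
    (hP₂ : ∀ z₁ z₂, P₂ z₁ z₂ = a / 3 * (z₁ * z₂) + b / 3 * (z₁ + z₂) + c)
    (hequi : (α₁ + α₂ + α₃) ^ 2 = 3 * (α₁ * α₂ + α₁ * α₃ + α₂ * α₃)) :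
    ∀ z₁ z₂ : ℂ, ¬(P₁ z₁ z₂ = 0 ∧ P₂ z₁ z₂ = 0) := by
  rintro z₁ z₂ ⟨h1, h2⟩
  rw [hP₁] at h1
  rw [hP₂] at h2
  have hb' : b = a ^ 2 / 3 := by
    rw [ha, hb]; linear_combination (-1 / 3) * hequi
  have hc' : c = a ^ 3 / 27 := by
    rw [hb'] at h1 h2
    linear_combination h2 - a / 3 * h1
  have e1 : (α₁ + a / 3) ^ 3 = 0 := by
    have h : α₁ ^ 3 + a * α₁ ^ 2 + b * α₁ + c = 0 := by rw [ha, hb, hc]; ring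
    rw [hb', hc'] at h
    linear_combination h
  have e2 : (α₂ + a / 3) ^ 3 = 0 := by
    have h : α₂ ^ 3 + a * α₂ ^ 2 + b * α₂ + c = 0 := by rw [ha, hb, hc]; ring
    rw [hb', hc'] at h
    linear_combination h
  have f1 := pow_eq_zero_iff (by norm_num) |>.mp e1
  have f2 := pow_eq_zero_iff (by norm_num) |>.mp e2
  exact h12 (by linear_combination f1 - f2)
end

section
/- Consider the system P(z,z,w) = 0 and P(z,w,w) = 0 in (z,w) ∈ ℂ². If α₁, α₂, α₃ are vertices of an equilateral triangle (a² = 3b), then the solution set is exactly {(α₁,α₁), (α₂,α₂), (α₃,α₃)}. If α₁, α₂, α₃ are not vertices of an equilateral triangle, then the solution set is exactly {(α₁,α₁), (α₂,α₂), (α₃,α₃), (u*, v*), (v*, u*)}. -/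
theorem stmt_11 (α₁ α₂ α₃ e₁ e₂ e₃ a b c u v : ℂ) (P : ℂ → ℂ → ℂ → ℂ)
    (he₁ : e₁ = Complex.exp (-(Real.pi : ℂ) / 3 * Complex.I))
    (he₂ : e₂ = Complex.exp ((Real.pi : ℂ) / 3 * Complex.I))
    (he₃ : e₃ = -1)
    (h12 : α₁ ≠ α₂) (h13 : α₁ ≠ α₃) (h23 : α₂ ≠ α₃)
    (ha : a = -(α₁ + α₂ + α₃))
    (hb : b = α₁ * α₂ + α₁ * α₃ + α₂ * α₃)
    (hc : c = -(α₁ * α₂ * α₃))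
    (hP : ∀ z₁ z₂ z₃, P z₁ z₂ z₃ =
      z₁ * z₂ * z₃ + a / 3 * (z₁ * z₂ + z₂ * z₃ + z₃ * z₁) + b / 3 * (z₁ + z₂ + z₃) + c)
    (hu : u = -((α₁ * α₂ * e₃ + α₁ * α₃ * e₂ + α₂ * α₃ * e₁) /
      (α₁ * e₁ + α₂ * e₂ + α₃ * e₃)))
    (hv : v = -((α₁ * α₂ * e₃ + α₁ * α₃ * e₁ + α₂ * α₃ * e₂) /
      (α₁ * e₂ + α₂ * e₁ + α₃ * e₃))) :
    (a ^ 2 = 3 * b →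
      {p : ℂ × ℂ | P p.1 p.1 p.2 = 0 ∧ P p.1 p.2 p.2 = 0} =
        {(α₁, α₁), (α₂, α₂), (α₃, α₃)}) ∧
    (α₁ * e₁ + α₂ * e₂ + α₃ * e₃ ≠ 0 → α₁ * e₂ + α₂ * e₁ + α₃ * e₃ ≠ 0 →
      {p : ℂ × ℂ | P p.1 p.1 p.2 = 0 ∧ P p.1 p.2 p.2 = 0} =
        {(α₁, α₁), (α₂, α₂), (α₃, α₃), (u, v), (v, u)}) := by
  have hI : Complex.exp ((Real.pi : ℂ) / 3 * Complex.I) = 1 / 2 + (Real.sqrt 3 : ℂ) / 2 * Complex.I := by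
    have h : ((Real.pi : ℂ) / 3) = ((Real.pi / 3 : ℝ) : ℂ) := by push_cast; rfl
    rw [Complex.exp_mul_I, h, ← Complex.ofReal_cos, ← Complex.ofReal_sin, Real.cos_pi_div_three,
      Real.sin_pi_div_three]
    push_cast; rfl
  have hI' : Complex.exp (-(Real.pi : ℂ) / 3 * Complex.I) = 1 / 2 - (Real.sqrt 3 : ℂ) / 2 * Complex.I := by
    have h : (-(Real.pi : ℂ) / 3) = ((-(Real.pi / 3) : ℝ) : ℂ) := by push_cast; ring
    rw [Complex.exp_mul_I, h, ← Complex.ofReal_cos, ← Complex.ofReal_sin, Real.cos_neg,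
      Real.sin_neg, Real.cos_pi_div_three, Real.sin_pi_div_three]
    push_cast; ring
  have hs3 : (Real.sqrt 3 : ℂ) ^ 2 = 3 := by
    rw [← Complex.ofReal_pow, Real.sq_sqrt (by norm_num)]; norm_num
  rw [hI'] at he₁
  rw [hI] at he₂
  have hf : e₂ = 1 - e₁ := by rw [he₁, he₂]; ring
  have hq : e₁ ^ 2 - e₁ + 1 = 0 := by
    rw [he₁]
    linear_combination (1 / 4 * Complex.I ^ 2) * hs3 + 3 / 4 * Complex.I_sq
  clear he₁ he₂ hI hI'
  have key : ∀ z w, (P z z w = 0 ∧ P z w w = 0) ↔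
      ((z = w ∧ (z = α₁ ∨ z = α₂ ∨ z = α₃)) ∨
        (z * w + a / 3 * (z + w) + b / 3 = 0 ∧ a / 3 * (z * w) + b / 3 * (z + w) + c = 0)) := by
    intro z w
    rw [hP, hP]
    constructor
    · rintro ⟨h1, h2⟩
      by_cases hzw : z = w
      · left
        refine ⟨hzw, ?_⟩
        subst hzw
        have : (z - α₁) * ((z - α₂) * (z - α₃)) = 0 := by
          rw [ha, hb, hc] at h1
          linear_combination h1
        simpa [sub_eq_zero] using this
      · right
        have h3 : z * w + a / 3 * (z + w) + b / 3 = 0 := by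
          apply mul_left_cancel₀ (sub_ne_zero.mpr hzw)
          linear_combination h1 - h2
        exact ⟨h3, by linear_combination h1 - z * h3⟩
    · rintro (⟨rfl, h⟩ | ⟨h1, h2⟩)
      · rw [ha, hb, hc]
        rcases h with rfl | rfl | rfl <;> constructor <;> ring
      · exact ⟨by linear_combination h2 + z * h1, by linear_combination h2 + w * h1⟩
  constructor
  · intro hab
    ext ⟨z, w⟩
    simp only [Set.mem_setOf_eq, Set.mem_insert_iff, Set.mem_singleton_iff, Prod.mk.injEq]
    rw [key]
    constructor
    · rintro (⟨rfl, h⟩ | ⟨h1, h2⟩)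
      · tauto
      · exfalso
        have hc' : 9 * c = a * b := by
          linear_combination 9 * h2 - 3 * a * h1 + (z + w) * hab
        have hcube : ∀ t, (t - α₁) * (t - α₂) * (t - α₃) = 0 → t = -a / 3 := by
          intro t ht
          have : (t + a / 3) ^ 3 = 0 := by
            have h0 : t ^ 3 + a * t ^ 2 + b * t + c = 0 := by
              rw [ha, hb, hc]; linear_combination ht
            linear_combination h0 + (t / 3 + a / 27) * hab - hc' / 9
          have := pow_eq_zero_iff (three_ne_zero) |>.mp this
          linear_combination this
        exact h12 ((hcube α₁ (by ring)).trans (hcube α₂ (by ring)).symm)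
    · rintro (⟨rfl, rfl⟩ | ⟨rfl, rfl⟩ | ⟨rfl, rfl⟩) <;> simp
  · intro hD1 hD2
    subst he₃ hf
    have hDD : (α₁ * e₁ + α₂ * (1 - e₁) + α₃ * -1) * (α₁ * (1 - e₁) + α₂ * e₁ + α₃ * -1)
        = a ^ 2 - 3 * b := by
      rw [ha, hb]
      linear_combination (-(α₁ - α₂) ^ 2) * hq
    have hne : a ^ 2 - 3 * b ≠ 0 := hDD ▸ mul_ne_zero hD1 hD2
    have hu' : u * (α₁ * e₁ + α₂ * (1 - e₁) + α₃ * -1) =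
        -(α₁ * α₂ * -1 + α₁ * α₃ * (1 - e₁) + α₂ * α₃ * e₁) := by
      rw [hu, neg_mul, div_mul_cancel₀ _ hD1]
    have hv' : v * (α₁ * (1 - e₁) + α₂ * e₁ + α₃ * -1) =
        -(α₁ * α₂ * -1 + α₁ * α₃ * e₁ + α₂ * α₃ * (1 - e₁)) := by
      rw [hv, neg_mul, div_mul_cancel₀ _ hD2]
    clear hu hv
    generalize hD1e : α₁ * e₁ + α₂ * (1 - e₁) + α₃ * -1 = D1 at *
    generalize hD2e : α₁ * (1 - e₁) + α₂ * e₁ + α₃ * -1 = D2 at *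
    have hS : (u + v) * (a ^ 2 - 3 * b) = 9 * c - a * b := by
      rw [← hDD]
      have : (u + v) * (D1 * D2) = (u * D1) * D2 + (v * D2) * D1 := by ring
      rw [this, hu', hv', ← hD1e, ← hD2e, ha, hb, hc]
      linear_combination (-2 * α₃ * (α₁ - α₂) ^ 2) * hq
    have hN : (u * v) * (a ^ 2 - 3 * b) = b ^ 2 - 3 * a * c := by
      rw [← hDD]
      have : (u * v) * (D1 * D2) = (u * D1) * (v * D2) := by ring
      rw [this, hu', hv', ha, hb, hc]
      linear_combination (-(α₃ ^ 2 * (α₁ - α₂) ^ 2)) * hq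
    have F1 : u * v + a / 3 * (u + v) + b / 3 = 0 := by
      apply mul_left_cancel₀ hne
      linear_combination hN + a / 3 * hS
    have F2 : a / 3 * (u * v) + b / 3 * (u + v) + c = 0 := by
      apply mul_left_cancel₀ hne
      linear_combination a / 3 * hN + b / 3 * hS
    ext ⟨z, w⟩
    simp only [Set.mem_setOf_eq, Set.mem_insert_iff, Set.mem_singleton_iff, Prod.mk.injEq]
    rw [key]
    constructor
    · rintro (⟨rfl, h⟩ | ⟨h1, h2⟩)
      · tauto
      · have hs : z + w = u + v := by
          apply mul_left_cancel₀ hne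
          linear_combination 3 * a * (h1 - F1) - 9 * (h2 - F2)
        have hp : z * w = u * v := by
          linear_combination h1 - F1 - a / 3 * hs
        have : (z - u) * (z - v) = 0 := by linear_combination z * hs - hp
        rcases mul_eq_zero.mp this with h | h
        · right; right; right; left
          exact ⟨by linear_combination h, by linear_combination hs - h⟩
        · right; right; right; right
          exact ⟨by linear_combination h, by linear_combination hs - h⟩
    · rintro (⟨rfl, rfl⟩ | ⟨rfl, rfl⟩ | ⟨rfl, rfl⟩ | ⟨rfl, rfl⟩ | ⟨rfl, rfl⟩)
      · simp
      · simp
      · simp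
      · exact Or.inr ⟨F1, F2⟩
      · exact Or.inr ⟨by linear_combination F1, by linear_combination F2⟩
end

section
/- Let w ∈ ℂ satisfy a + 3w ≠ 0 and (a²−3b)w² + (ab−9c)w + (b²−3ac) ≠ 0. Then the set {z ∈ ℂ : 3z² + 2az + b ≠ 0 and Q(z) = w} has exactly two elements. Moreover, if α₁, α₂, α₃ are not vertices of an equilateral triangle, then Q(u*) = v* and Q(v*) = u*. -/
lemma apol_poly (x y z e : ℂ) (he : e ^ 2 - e + 1 = 0) :
    (-(x + y + z) * (x * y * (-1) + x * z * (1 - e) + y * z * e) ^ 2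
      - 2 * (x * y + x * z + y * z) * (x * y * (-1) + x * z * (1 - e) + y * z * e)
        * (x * e + y * (1 - e) + z * (-1))
      + 3 * (-(x * y * z)) * (x * e + y * (1 - e) + z * (-1)) ^ 2)
      * (x * (1 - e) + y * e + z * (-1))
    - (x * y * (-1) + x * z * e + y * z * (1 - e)) *
      (3 * (x * y * (-1) + x * z * (1 - e) + y * z * e) ^ 2
       - 2 * (-(x + y + z)) * (x * y * (-1) + x * z * (1 - e) + y * z * e)
        * (x * e + y * (1 - e) + z * (-1))
       + (x * y + x * z + y * z) * (x * e + y * (1 - e) + z * (-1)) ^ 2) = 0 := by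
  grind

lemma apol (x y z e f a b c : ℂ) (hf : f = 1 - e) (he : e ^ 2 - e + 1 = 0)
    (ha : a = -(x + y + z)) (hb : b = x * y + x * z + y * z) (hc : c = -(x * y * z))
    (h1 : x * e + y * f + z * (-1) ≠ 0) (h2 : x * f + y * e + z * (-1) ≠ 0) (u v : ℂ)
    (hu : u = -((x * y * (-1) + x * z * f + y * z * e) / (x * e + y * f + z * (-1))))
    (hv : v = -((x * y * (-1) + x * z * e + y * z * f) / (x * f + y * e + z * (-1)))) :
    (a * u ^ 2 + 2 * b * u + 3 * c) + v * (3 * u ^ 2 + 2 * a * u + b) = 0 := by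
  have P := apol_poly x y z e he
  subst hf ha hb hc
  generalize hD : x * e + y * (1 - e) + z * (-1) = D at *
  generalize hE : x * (1 - e) + y * e + z * (-1) = E at *
  generalize hN : x * y * (-1) + x * z * (1 - e) + y * z * e = N at *
  generalize hM : x * y * (-1) + x * z * e + y * z * (1 - e) = M at *
  have hu' : u * D = -N := by rw [hu]; field_simp
  have hv' : v * E = -M := by rw [hv]; field_simp
  have hDE : D ^ 2 * E ≠ 0 := mul_ne_zero (pow_ne_zero 2 h1) h2
  apply (mul_eq_zero.1 (?_ : (D ^ 2 * E) * _ = 0)).resolve_left hDE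
  have hN' : N = -(u * D) := by rw [hu']; ring
  have hM' : M = -(v * E) := by rw [hv']; ring
  rw [hN', hM'] at P
  linear_combination P

theorem stmt_13 (α₁ α₂ α₃ e₁ e₂ e₃ a b c u v : ℂ) (Q : ℂ → ℂ)
    (he₁ : e₁ = Complex.exp (-(Real.pi : ℂ) / 3 * Complex.I))
    (he₂ : e₂ = Complex.exp ((Real.pi : ℂ) / 3 * Complex.I))
    (he₃ : e₃ = -1)
    (h12 : α₁ ≠ α₂) (h13 : α₁ ≠ α₃) (h23 : α₂ ≠ α₃)
    (ha : a = -(α₁ + α₂ + α₃))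
    (hb : b = α₁ * α₂ + α₁ * α₃ + α₂ * α₃)
    (hc : c = -(α₁ * α₂ * α₃))
    (hQ : ∀ z, Q z = -((a * z ^ 2 + 2 * b * z + 3 * c) / (3 * z ^ 2 + 2 * a * z + b)))
    (hu : u = -((α₁ * α₂ * e₃ + α₁ * α₃ * e₂ + α₂ * α₃ * e₁) /
      (α₁ * e₁ + α₂ * e₂ + α₃ * e₃)))
    (hv : v = -((α₁ * α₂ * e₃ + α₁ * α₃ * e₁ + α₂ * α₃ * e₂) /
      (α₁ * e₂ + α₂ * e₁ + α₃ * e₃)))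
    (w : ℂ) (hw₁ : a + 3 * w ≠ 0)
    (hw₂ : (a ^ 2 - 3 * b) * w ^ 2 + (a * b - 9 * c) * w + (b ^ 2 - 3 * a * c) ≠ 0) :
    {z : ℂ | 3 * z ^ 2 + 2 * a * z + b ≠ 0 ∧ Q z = w}.encard = 2 ∧
    (α₁ * e₁ + α₂ * e₂ + α₃ * e₃ ≠ 0 → α₁ * e₂ + α₂ * e₁ + α₃ * e₃ ≠ 0 →
      Q u = v ∧ Q v = u) := by
  have hsum : e₂ = 1 - e₁ := by
    rw [he₁, he₂, Complex.exp_mul_I, Complex.exp_mul_I, neg_div, Complex.cos_neg, Complex.sin_neg]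
    have : Complex.cos ((Real.pi : ℂ) / 3) = 1 / 2 := by
      have := congrArg (fun r : ℝ => (r : ℂ)) Real.cos_pi_div_three
      push_cast at this
      exact this
    rw [this]; ring
  have hprod : e₁ * e₂ = 1 := by
    rw [he₁, he₂, ← Complex.exp_add]
    convert Complex.exp_zero using 2
    ring
  have hsq : e₁ ^ 2 - e₁ + 1 = 0 := by rw [hsum] at hprod; linear_combination -hprod
  have hsq2 : e₂ ^ 2 - e₂ + 1 = 0 := by rw [hsum]; linear_combination hsq
  have hnd : ∀ z, a * z ^ 2 + 2 * b * z + 3 * c = 0 → 3 * z ^ 2 + 2 * a * z + b ≠ 0 := by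
    intro z h1 h2
    have h3 : (z - α₁) * ((z - α₂) * (z - α₃)) = 0 := by
      subst ha hb hc
      linear_combination (1/3) * h1 + (z/3) * h2
    have h4 : (z - α₂) * (z - α₃) + (z - α₁) * (z - α₃) + (z - α₁) * (z - α₂) = 0 := by
      subst ha hb hc
      linear_combination h2
    have k12 := sub_ne_zero.2 h12
    have k13 := sub_ne_zero.2 h13
    have k23 := sub_ne_zero.2 h23
    rcases mul_eq_zero.1 h3 with h | h
    · obtain rfl : z = α₁ := sub_eq_zero.1 h
      have : (z - α₂) * (z - α₃) = 0 := by linear_combination h4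
      simp_all
    · rcases mul_eq_zero.1 h with h | h
      · obtain rfl : z = α₂ := sub_eq_zero.1 h
        have : (α₁ - z) * (z - α₃) = 0 := by linear_combination -h4
        simp_all
      · obtain rfl : z = α₃ := sub_eq_zero.1 h
        have : (α₁ - z) * (α₂ - z) = 0 := by linear_combination h4
        simp_all
  have key : ∀ z t, (a * z ^ 2 + 2 * b * z + 3 * c) + t * (3 * z ^ 2 + 2 * a * z + b) = 0 →
      3 * z ^ 2 + 2 * a * z + b ≠ 0 ∧ Q z = t := by
    intro z t h
    have h0 : 3 * z ^ 2 + 2 * a * z + b ≠ 0 := by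
      intro h1
      rw [h1] at h
      exact hnd z (by linear_combination h) h1
    refine ⟨h0, ?_⟩
    rw [hQ, ← neg_div, div_eq_iff h0]
    linear_combination -h
  refine ⟨?_, ?_⟩
  · obtain ⟨s, hs⟩ := IsAlgClosed.exists_pow_nat_eq
      ((a ^ 2 - 3 * b) * w ^ 2 + (a * b - 9 * c) * w + (b ^ 2 - 3 * a * c)) (n := 2) (by norm_num)
    have hs0 : s ≠ 0 := by
      rintro rfl
      exact hw₂ (by rw [← hs]; ring)
    have hset : {z : ℂ | 3 * z ^ 2 + 2 * a * z + b ≠ 0 ∧ Q z = w} =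
        {(-(b + a * w) + s) / (a + 3 * w), (-(b + a * w) - s) / (a + 3 * w)} := by
      ext z
      simp only [Set.mem_ofPred_eq, Set.mem_insert_iff, Set.mem_singleton_iff]
      rw [eq_div_iff hw₁, eq_div_iff hw₁]
      constructor
      · rintro ⟨h0, h⟩
        rw [hQ, ← neg_div, div_eq_iff h0] at h
        have : (z * (a + 3 * w) - (-(b + a * w) + s)) * (z * (a + 3 * w) - (-(b + a * w) - s)) = 0 := by
          linear_combination -(a + 3 * w) * h - hs
        rcases mul_eq_zero.1 this with h | h
        · exact Or.inl (sub_eq_zero.1 h)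
        · exact Or.inr (sub_eq_zero.1 h)
      · intro h
        apply key
        have : (z * (a + 3 * w) - (-(b + a * w) + s)) * (z * (a + 3 * w) - (-(b + a * w) - s)) = 0 := by
          rcases h with h | h <;> rw [h] <;> ring
        apply (mul_eq_zero.1 (?_ : (a + 3 * w) * _ = 0)).resolve_left hw₁
        linear_combination this + hs
    rw [hset, Set.encard_pair]
    intro h
    rw [div_left_inj' hw₁] at h
    apply hs0
    linear_combination h / 2
  · intro hd1 hd2
    subst he₃
    have hsum2 : e₁ = 1 - e₂ := by rw [hsum]; ring
    exact ⟨(key u v (apol α₁ α₂ α₃ e₁ e₂ a b c hsum hsq ha hb hc hd1 hd2 u v hu hv)).2,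
      (key v u (apol α₁ α₂ α₃ e₂ e₁ a b c hsum2 hsq2 ha hb hc hd2 hd1 v u hv hu)).2⟩
end

section
/- For every z ∈ ℂ with 2(a²−3b)z + (ab−9c) ≠ 0, the following identities hold: a·G(z)² + 2b·G(z) + 3c = −3Δ·(az²+2bz+3c)/(2(a²−3b)z+(ab−9c))², and 3·G(z)² + 2a·G(z) + b = −3Δ·(3z²+2az+b)/(2(a²−3b)z+(ab−9c))². Consequently, if additionally 3z² + 2az + b ≠ 0, then Q(G(z)) = Q(z). Moreover, if α₁, α₂, α₃ are not vertices of an equilateral triangle, then G(u*) = u* and G(v*) = v*. -/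
theorem aux_fix (x y w e a b c u : ℂ) (he : e ^ 2 = e - 1)
    (h12 : x ≠ y) (h13 : x ≠ w) (h23 : y ≠ w)
    (ha : a = -(x + y + w)) (hb : b = x * y + x * w + y * w) (hc : c = -(x * y * w))
    (hL : x * (1 - e) + y * e + w * (-1) ≠ 0)
    (hu : u = -((x * y * (-1) + x * w * e + y * w * (1 - e)) /
      (x * (1 - e) + y * e + w * (-1)))) :
    -(((a * b - 9 * c) * u + 2 * (b ^ 2 - 3 * c * a)) /
      (2 * (a ^ 2 - 3 * b) * u + (a * b - 9 * c))) = u := by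
  have hmul : u * (x * (1 - e) + y * e + w * (-1)) =
      -(x * y * (-1) + x * w * e + y * w * (1 - e)) := by
    rw [hu, neg_mul, div_mul_cancel₀ _ hL]
  have hA : a ^ 2 - 3 * b = (x * (1 - e) + y * e + w * (-1)) * (x * e + y * (1 - e) + w * (-1)) := by
    subst ha hb
    linear_combination (x - y) ^ 2 * he
  have hB : a * b - 9 * c = (x * (1 - e) + y * e + w * (-1)) * (x * y * (-1) + x * w * (1 - e) + y * w * e)
     + (x * e + y * (1 - e) + w * (-1)) * (x * y * (-1) + x * w * e + y * w * (1 - e)) := by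
    subst ha hb hc
    linear_combination (-2 * w * (x - y) ^ 2) * he
  have hC : b ^ 2 - 3 * c * a = (x * y * (-1) + x * w * e + y * w * (1 - e)) * (x * y * (-1) + x * w * (1 - e) + y * w * e) := by
    subst ha hb hc
    linear_combination (w ^ 2 * (x - y) ^ 2) * he
  have hD : (2 * (a ^ 2 - 3 * b) * u + (a * b - 9 * c)) ^ 2 =
      -3 * ((x - y) * (x - w) * (y - w)) ^ 2 := by
    have h1 : 2 * (a ^ 2 - 3 * b) * u + (a * b - 9 * c) =
       (x * (1 - e) + y * e + w * (-1)) * (x * y * (-1) + x * w * (1 - e) + y * w * e)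
     - (x * e + y * (1 - e) + w * (-1)) * (x * y * (-1) + x * w * e + y * w * (1 - e)) := by
      rw [hA, hB]
      linear_combination 2 * (x * e + y * (1 - e) + w * (-1)) * hmul
    have h2 : (x * (1 - e) + y * e + w * (-1)) * (x * y * (-1) + x * w * (1 - e) + y * w * e)
     - (x * e + y * (1 - e) + w * (-1)) * (x * y * (-1) + x * w * e + y * w * (1 - e)) =
       (2 * e - 1) * ((x - y) * (x - w) * (y - w)) := by ring
    rw [h1, h2]
    linear_combination 4 * ((x - y) * (x - w) * (y - w)) ^ 2 * he
  have hD0 : 2 * (a ^ 2 - 3 * b) * u + (a * b - 9 * c) ≠ 0 := by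
    intro h
    rw [h] at hD
    have : -3 * ((x - y) * (x - w) * (y - w)) ^ 2 ≠ 0 := by
      simp [sub_eq_zero, h12, h13, h23]
    exact this (by rw [← hD]; ring)
  rw [← neg_div, div_eq_iff hD0, hA, hB, hC]
  generalize x * y * (-1) + x * w * (1 - e) + y * w * e = N2 at *
  generalize x * y * (-1) + x * w * e + y * w * (1 - e) = N1 at *
  generalize x * (1 - e) + y * e + w * (-1) = L1 at *
  generalize x * e + y * (1 - e) + w * (-1) = L2 at *
  linear_combination (-2 * (L2 * u + N2)) * hmul

theorem aux_exp : (Complex.exp ((Real.pi : ℂ) / 3 * Complex.I)) ^ 2 =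
      Complex.exp ((Real.pi : ℂ) / 3 * Complex.I) - 1 ∧
    Complex.exp (-(Real.pi : ℂ) / 3 * Complex.I) =
      1 - Complex.exp ((Real.pi : ℂ) / 3 * Complex.I) := by
  have hs : ((Real.sqrt 3 : ℝ) : ℂ) ^ 2 = 3 := by
    rw [← Complex.ofReal_pow, Real.sq_sqrt (by norm_num)]; norm_num
  have hcos : Complex.cos ((Real.pi : ℂ) / 3) = 1 / 2 := by
    have := congrArg (fun r : ℝ => (r : ℂ)) Real.cos_pi_div_three
    push_cast at this; exact this
  have hsin : Complex.sin ((Real.pi : ℂ) / 3) = (Real.sqrt 3 : ℝ) / 2 := by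
    have := congrArg (fun r : ℝ => (r : ℂ)) Real.sin_pi_div_three
    push_cast at this; exact this
  rw [neg_div, Complex.exp_mul_I, Complex.exp_mul_I, Complex.cos_neg, Complex.sin_neg, hcos, hsin]
  constructor
  · linear_combination (1 / 4 * Complex.I ^ 2) * hs + 3 / 4 * Complex.I_sq
  · ring

theorem stmt_14 (α₁ α₂ α₃ e₁ e₂ e₃ a b c u v Δ : ℂ) (Q G : ℂ → ℂ)
    (he₁ : e₁ = Complex.exp (-(Real.pi : ℂ) / 3 * Complex.I))
    (he₂ : e₂ = Complex.exp ((Real.pi : ℂ) / 3 * Complex.I))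
    (he₃ : e₃ = -1)
    (h12 : α₁ ≠ α₂) (h13 : α₁ ≠ α₃) (h23 : α₂ ≠ α₃)
    (ha : a = -(α₁ + α₂ + α₃))
    (hb : b = α₁ * α₂ + α₁ * α₃ + α₂ * α₃)
    (hc : c = -(α₁ * α₂ * α₃))
    (hQ : ∀ z, Q z = -((a * z ^ 2 + 2 * b * z + 3 * c) / (3 * z ^ 2 + 2 * a * z + b)))
    (hG : ∀ z, G z = -(((a * b - 9 * c) * z + 2 * (b ^ 2 - 3 * c * a)) /
      (2 * (a ^ 2 - 3 * b) * z + (a * b - 9 * c))))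
    (hΔ : Δ = a ^ 2 * b ^ 2 - 4 * b ^ 3 - 4 * a ^ 3 * c - 27 * c ^ 2 + 18 * a * b * c)
    (hu : u = -((α₁ * α₂ * e₃ + α₁ * α₃ * e₂ + α₂ * α₃ * e₁) /
      (α₁ * e₁ + α₂ * e₂ + α₃ * e₃)))
    (hv : v = -((α₁ * α₂ * e₃ + α₁ * α₃ * e₁ + α₂ * α₃ * e₂) /
      (α₁ * e₂ + α₂ * e₁ + α₃ * e₃))) :
    (∀ z : ℂ, 2 * (a ^ 2 - 3 * b) * z + (a * b - 9 * c) ≠ 0 →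
      (a * (G z) ^ 2 + 2 * b * (G z) + 3 * c =
        -(3 * Δ) * (a * z ^ 2 + 2 * b * z + 3 * c) /
          (2 * (a ^ 2 - 3 * b) * z + (a * b - 9 * c)) ^ 2 ∧
       3 * (G z) ^ 2 + 2 * a * (G z) + b =
        -(3 * Δ) * (3 * z ^ 2 + 2 * a * z + b) /
          (2 * (a ^ 2 - 3 * b) * z + (a * b - 9 * c)) ^ 2 ∧
       (3 * z ^ 2 + 2 * a * z + b ≠ 0 → Q (G z) = Q z))) ∧
    (α₁ * e₁ + α₂ * e₂ + α₃ * e₃ ≠ 0 → α₁ * e₂ + α₂ * e₁ + α₃ * e₃ ≠ 0 →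
      G u = u ∧ G v = v) := by
  obtain ⟨hee, hee'⟩ := aux_exp
  rw [← he₂] at hee hee'
  rw [← he₁] at hee'
  clear he₁ he₂
  subst hee' he₃
  have hΔ' : Δ = ((α₁ - α₂) * (α₁ - α₃) * (α₂ - α₃)) ^ 2 := by
    subst hΔ ha hb hc; ring
  have hΔ0 : Δ ≠ 0 := by
    rw [hΔ']; simp [sub_eq_zero, h12, h13, h23]
  refine ⟨fun z hz => ?_, fun hL1 hL2 => ⟨?_, ?_⟩⟩
  · have hm : G z * (2 * (a ^ 2 - 3 * b) * z + (a * b - 9 * c)) =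
        -((a * b - 9 * c) * z + 2 * (b ^ 2 - 3 * c * a)) := by
      rw [hG, neg_mul, div_mul_cancel₀ _ hz]
    have k1 : a * (G z) ^ 2 + 2 * b * (G z) + 3 * c =
        -(3 * Δ) * (a * z ^ 2 + 2 * b * z + 3 * c) /
          (2 * (a ^ 2 - 3 * b) * z + (a * b - 9 * c)) ^ 2 := by
      rw [hΔ, eq_div_iff (pow_ne_zero 2 hz)]
      linear_combination (a * (G z * (2 * (a ^ 2 - 3 * b) * z + (a * b - 9 * c)) - ((a * b - 9 * c) * z + 2 * (b ^ 2 - 3 * c * a))) + 2 * b * (2 * (a ^ 2 - 3 * b) * z + (a * b - 9 * c))) * hm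
    have k2 : 3 * (G z) ^ 2 + 2 * a * (G z) + b =
        -(3 * Δ) * (3 * z ^ 2 + 2 * a * z + b) /
          (2 * (a ^ 2 - 3 * b) * z + (a * b - 9 * c)) ^ 2 := by
      rw [hΔ, eq_div_iff (pow_ne_zero 2 hz)]
      linear_combination (3 * (G z * (2 * (a ^ 2 - 3 * b) * z + (a * b - 9 * c)) - ((a * b - 9 * c) * z + 2 * (b ^ 2 - 3 * c * a))) + 2 * a * (2 * (a ^ 2 - 3 * b) * z + (a * b - 9 * c))) * hm
    refine ⟨k1, k2, fun hq => ?_⟩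
    rw [hQ, hQ z, k1, k2, div_div_div_cancel_right₀ (pow_ne_zero 2 hz),
      mul_div_mul_left _ _ (neg_ne_zero.mpr (mul_ne_zero three_ne_zero hΔ0))]
  · rw [hG]
    exact aux_fix α₁ α₂ α₃ e₂ a b c u hee h12 h13 h23 ha hb hc hL1 hu
  · rw [hG]
    have h1 : (1 - (1 - e₂)) = e₂ := by ring
    refine aux_fix α₁ α₂ α₃ (1 - e₂) a b c v (by linear_combination hee) h12 h13 h23 ha hb hc ?_ ?_
    · rw [h1]; exact hL2
    · rw [h1]; exact hv
end

section
/- Suppose α₁, α₂, α₃ are not vertices of an equilateral triangle. Let w₁, w₂ ∈ ℂ with w₁ ≠ w₂, 3w₁² + 2aw₁ + b ≠ 0, 3w₂² + 2aw₂ + b ≠ 0, 2(a²−3b)w₁ + (ab−9c) ≠ 0, and Q(w₁) = Q(w₂). Then G(w₁) = w₂. -/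
theorem stmt_15 (α₁ α₂ α₃ e₁ e₂ e₃ a b c : ℂ) (Q G : ℂ → ℂ)
    (he₁ : e₁ = Complex.exp (-(Real.pi : ℂ) / 3 * Complex.I))
    (he₂ : e₂ = Complex.exp ((Real.pi : ℂ) / 3 * Complex.I))
    (he₃ : e₃ = -1)
    (h12 : α₁ ≠ α₂) (h13 : α₁ ≠ α₃) (h23 : α₂ ≠ α₃)
    (ha : a = -(α₁ + α₂ + α₃))
    (hb : b = α₁ * α₂ + α₁ * α₃ + α₂ * α₃)
    (hc : c = -(α₁ * α₂ * α₃))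
    (hQ : ∀ z, Q z = -((a * z ^ 2 + 2 * b * z + 3 * c) / (3 * z ^ 2 + 2 * a * z + b)))
    (hG : ∀ z, G z = -(((a * b - 9 * c) * z + 2 * (b ^ 2 - 3 * c * a)) /
      (2 * (a ^ 2 - 3 * b) * z + (a * b - 9 * c))))
    (hne₁ : α₁ * e₁ + α₂ * e₂ + α₃ * e₃ ≠ 0)
    (hne₂ : α₁ * e₂ + α₂ * e₁ + α₃ * e₃ ≠ 0)
    (w₁ w₂ : ℂ) (hw : w₁ ≠ w₂)
    (hd₁ : 3 * w₁ ^ 2 + 2 * a * w₁ + b ≠ 0)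
    (hd₂ : 3 * w₂ ^ 2 + 2 * a * w₂ + b ≠ 0)
    (hdG : 2 * (a ^ 2 - 3 * b) * w₁ + (a * b - 9 * c) ≠ 0)
    (hQQ : Q w₁ = Q w₂) :
    G w₁ = w₂ := by
  rw [hQ, hQ, neg_inj, div_eq_div_iff hd₁ hd₂] at hQQ
  have key : 2 * (a ^ 2 - 3 * b) * w₁ * w₂ + (a * b - 9 * c) * (w₁ + w₂)
      + 2 * (b ^ 2 - 3 * c * a) = 0 := by
    apply mul_left_cancel₀ (sub_ne_zero.mpr hw)
    linear_combination hQQ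
  rw [hG, ← neg_div, div_eq_iff hdG]
  linear_combination -key
end

section
/- Suppose α₁, α₂, α₃ are not vertices of an equilateral triangle. Then for every z ∈ ℂ such that z(α₁e₁+α₂e₂+α₃e₃)+(α₁e₂+α₂e₁+α₃e₃) ≠ 0, −z(α₁e₁+α₂e₂+α₃e₃)+(α₁e₂+α₂e₁+α₃e₃) ≠ 0, and 2(a²−3b)W(z) + (ab−9c) ≠ 0, one has G(W(z)) = W(−z). -/
theorem stmt_16 (α₁ α₂ α₃ e₁ e₂ e₃ a b c : ℂ) (W G : ℂ → ℂ)
    (he₁ : e₁ = Complex.exp (-(Real.pi : ℂ) / 3 * Complex.I))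
    (he₂ : e₂ = Complex.exp ((Real.pi : ℂ) / 3 * Complex.I))
    (he₃ : e₃ = -1)
    (h12 : α₁ ≠ α₂) (h13 : α₁ ≠ α₃) (h23 : α₂ ≠ α₃)
    (ha : a = -(α₁ + α₂ + α₃))
    (hb : b = α₁ * α₂ + α₁ * α₃ + α₂ * α₃)
    (hc : c = -(α₁ * α₂ * α₃))
    (hW : ∀ z, W z =
      -((z * (α₁ * α₂ * e₃ + α₁ * α₃ * e₂ + α₂ * α₃ * e₁) +
          (α₁ * α₂ * e₃ + α₁ * α₃ * e₁ + α₂ * α₃ * e₂)) /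
        (z * (α₁ * e₁ + α₂ * e₂ + α₃ * e₃) + (α₁ * e₂ + α₂ * e₁ + α₃ * e₃))))
    (hG : ∀ z, G z = -(((a * b - 9 * c) * z + 2 * (b ^ 2 - 3 * c * a)) /
      (2 * (a ^ 2 - 3 * b) * z + (a * b - 9 * c))))
    (hne₁ : α₁ * e₁ + α₂ * e₂ + α₃ * e₃ ≠ 0)
    (hne₂ : α₁ * e₂ + α₂ * e₁ + α₃ * e₃ ≠ 0) :
    ∀ z : ℂ,
      z * (α₁ * e₁ + α₂ * e₂ + α₃ * e₃) + (α₁ * e₂ + α₂ * e₁ + α₃ * e₃) ≠ 0 →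
      -z * (α₁ * e₁ + α₂ * e₂ + α₃ * e₃) + (α₁ * e₂ + α₂ * e₁ + α₃ * e₃) ≠ 0 →
      2 * (a ^ 2 - 3 * b) * W z + (a * b - 9 * c) ≠ 0 →
      G (W z) = W (-z) := by
  have hm : e₂ * e₁ = 1 := by
    rw [he₁, he₂, ← Complex.exp_add]
    ring_nf
    exact Complex.exp_zero
  have hs : e₂ + e₁ = 1 := by
    have h := Complex.two_cos ((Real.pi : ℂ) / 3)
    have h2 : Complex.cos ((Real.pi : ℂ) / 3) = 1 / 2 := by
      have := congrArg (fun x : ℝ => (x : ℂ)) Real.cos_pi_div_three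
      push_cast at this
      exact this
    rw [he₁, he₂, neg_div, ← h, h2]
    norm_num
  have h1 : e₁ = 1 - e₂ := by linear_combination hs
  have hq : e₂ ^ 2 = e₂ - 1 := by
    rw [h1] at hm
    linear_combination -hm
  clear he₁ he₂
  intro z hD hE hF
  rw [hG, hW (-z)]
  rw [hW z] at hF ⊢
  obtain ⟨P, hP⟩ : ∃ P, P = α₁ * e₁ + α₂ * e₂ + α₃ * e₃ := ⟨_, rfl⟩
  obtain ⟨Q, hQ⟩ : ∃ Q, Q = α₁ * e₂ + α₂ * e₁ + α₃ * e₃ := ⟨_, rfl⟩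
  obtain ⟨p, hp⟩ : ∃ p, p = α₁ * α₂ * e₃ + α₁ * α₃ * e₂ + α₂ * α₃ * e₁ := ⟨_, rfl⟩
  obtain ⟨q, hq'⟩ : ∃ q, q = α₁ * α₂ * e₃ + α₁ * α₃ * e₁ + α₂ * α₃ * e₂ := ⟨_, rfl⟩
  have k1 : a ^ 2 - 3 * b = P * Q := by
    rw [hP, hQ, ha, hb, he₃, h1]
    clear * - hq
    grind
  have k2 : a * b - 9 * c = q * P + p * Q := by
    rw [hP, hQ, hp, hq', ha, hb, hc, he₃, h1]
    clear * - hq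
    grind
  have k3 : b ^ 2 - 3 * c * a = p * q := by
    rw [hp, hq', ha, hb, hc, he₃, h1]
    clear * - hq
    grind
  rw [← hP, ← hQ] at hD hE
  rw [← hP, ← hQ, ← hp, ← hq', k1, k2] at hF
  rw [← hP, ← hQ, ← hp, ← hq', k1, k2, k3]
  rw [neg_inj, div_eq_div_iff hF hE]
  obtain ⟨w, hw⟩ : ∃ w, w = (z * p + q) / (z * P + Q) := ⟨_, rfl⟩
  rw [← hw]
  have hw2 : w * (z * P + Q) = z * p + q := by
    rw [hw, div_mul_cancel₀ _ hD]
  apply mul_right_cancel₀ hD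
  linear_combination (-(q * P + p * Q) * (-z * P + Q) + 2 * P * Q * (-z * p + q)) * hw2
end

section
/- Let w₁, w₂, w₃ be nonzero complex numbers with w₁², w₂², w₃² pairwise distinct, and assume detB∘ ≠ 0; set u₀ := w₁w₂w₃ · detA∘ / detB∘. Then there exist α, β ∈ ℂ and f, e ∈ ℝ, not all zero, such that α·u² + conj(α)·conj(u)² + β·u + conj(β)·conj(u) + f·u·conj(u) + e = 0 holds for every u in the set {w₁w₂, −w₁w₂, w₁w₃, −w₁w₃, w₂w₃, −w₂w₃, u₀}; that is, the real conic determined by the six points ±w₁w₂, ±w₁w₃, ±w₂w₃ also passes through u₀. -/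
open ComplexConjugate

def cA (a b c x y z : ℂ) : ℂ := x*y*(b*x-a*y) - x*z*(c*x-a*z) + y*z*(c*y-b*z)
def cB (a b c x y z : ℂ) : ℂ :=
  a*x^2*(y*c-z*b) - b*y^2*(x*c-z*a) + c*z^2*(x*b-y*a)
def d3 (p q r s t u v w m : ℂ) : ℂ :=
  p*(t*m-u*w) - q*(s*m-u*v) + r*(s*w-t*v)
-- coefficients (for the points bc, ac, ab with conjugates yz, xz, xy)
def kα (p q r x y z : ℂ) : ℂ :=
  d3 (x^2) (p*x) 1 (y^2) (q*y) 1 (z^2) (r*z) 1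
def kf (p q r x y z : ℂ) : ℂ :=
  d3 (p^2) (x^2) 1 (q^2) (y^2) 1 (r^2) (z^2) 1
def ke (p q r x y z : ℂ) : ℂ :=
  -d3 (p^2) (x^2) (p*x) (q^2) (y^2) (q*y) (r^2) (z^2) (r*z)

set_option maxHeartbeats 4000000 in
theorem key (a b c x y z : ℂ) :
    kα (b*c) (a*c) (a*b) (y*z) (x*z) (x*y) * (a*b*c*cA a b c x y z)^2 * (cB x y z a b c)^2
    - kα (y*z) (x*z) (x*y) (b*c) (a*c) (a*b) * (x*y*z*cA x y z a b c)^2 * (cB a b c x y z)^2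
    + kf (b*c) (a*c) (a*b) (y*z) (x*z) (x*y) * (a*b*c*cA a b c x y z) * (x*y*z*cA x y z a b c)
      * (cB x y z a b c * cB a b c x y z)
    + ke (b*c) (a*c) (a*b) (y*z) (x*z) (x*y) * (cB x y z a b c * cB a b c x y z)^2 = 0 := by
  unfold kα kf ke d3 cA cB
  ring

theorem nondeg (p q r x y z : ℂ) (hpq : p^2 ≠ q^2) (hpr : p^2 ≠ r^2) (hqr : q^2 ≠ r^2)
    (hA : kα x y z p q r = 0) (hf : kf p q r x y z = 0) :
    p*z = x*r ∧ q*z = y*r := by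
  have e1 : p^2 - r^2 ≠ 0 := sub_ne_zero.2 hpr
  have e2 : q^2 - r^2 ≠ 0 := sub_ne_zero.2 hqr
  have e3 : p^2 - q^2 ≠ 0 := sub_ne_zero.2 hpq
  obtain ⟨k, hk⟩ : ∃ k, k = (q^2-r^2)/(p^2-r^2) := ⟨_, rfl⟩
  have hs : q^2 - r^2 = k*(p^2-r^2) := by rw [hk]; field_simp
  have hk0 : k ≠ 0 := by rintro rfl; apply e2; simpa using hs
  have hk1 : k - 1 ≠ 0 := by
    intro h; apply e3; linear_combination -hs - (p^2-r^2)*h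
  unfold kα d3 at hA
  unfold kf d3 at hf
  have ht : y^2 - z^2 = k*(x^2-z^2) := by
    apply mul_left_cancel₀ e1
    linear_combination hf + (x^2-z^2)*hs
  have hm : q*y - r*z = k*(p*x-r*z) := by
    apply mul_left_cancel₀ e1
    linear_combination hA + (p*x-r*z)*hs
  have hq : (p^2-r^2)*(x^2-z^2) - (p*x-r*z)^2 = 0 := by
    apply mul_left_cancel₀ hk1
    apply mul_left_cancel₀ hk0
    have hs' : q^2 = r^2 + k*(p^2-r^2) := by linear_combination hs
    have ht' : y^2 = z^2 + k*(x^2-z^2) := by linear_combination ht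
    have hm' : q*y = r*z + k*(p*x-r*z) := by linear_combination hm
    have h : q^2*y^2 = (q*y)^2 := by ring
    rw [hs', ht', hm'] at h
    linear_combination h
  have g : (p*z-x*r)^2 = 0 := by linear_combination -hq
  have g2 : (q*z-y*r)^2 = 0 := by
    have : (q^2-r^2)*(y^2-z^2) - (q*y-r*z)^2 = 0 := by
      rw [hs, ht, hm]; linear_combination k^2*hq
    linear_combination -this
  exact ⟨sub_eq_zero.1 (pow_eq_zero_iff two_ne_zero |>.1 g),
    sub_eq_zero.1 (pow_eq_zero_iff two_ne_zero |>.1 g2)⟩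

theorem stmt_18 (w₁ w₂ w₃ : ℂ)
    (h₁ : w₁ ≠ 0) (h₂ : w₂ ≠ 0) (h₃ : w₃ ≠ 0)
    (h12 : w₁ ^ 2 ≠ w₂ ^ 2) (h13 : w₁ ^ 2 ≠ w₃ ^ 2) (h23 : w₂ ^ 2 ≠ w₃ ^ 2)
    (detA detB u₀ : ℂ)
    (hdetA : detA = Matrix.det
      !![conj w₁ * conj w₂, conj w₁ * conj w₃, conj w₂ * conj w₃;
         w₃, w₂, w₁;
         conj w₃, conj w₂, conj w₁])
    (hdetB : detB = Matrix.det
      !![w₁ * (conj w₁) ^ 2, w₂ * (conj w₂) ^ 2, w₃ * (conj w₃) ^ 2;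
         conj w₁, conj w₂, conj w₃;
         w₁, w₂, w₃])
    (hB : detB ≠ 0)
    (hu₀ : u₀ = w₁ * w₂ * w₃ * detA / detB) :
    ∃ (α β : ℂ) (f e : ℝ), ¬(α = 0 ∧ β = 0 ∧ f = 0 ∧ e = 0) ∧
      ∀ u ∈ ({w₁ * w₂, -(w₁ * w₂), w₁ * w₃, -(w₁ * w₃), w₂ * w₃, -(w₂ * w₃), u₀} :
          Set ℂ),
        α * u ^ 2 + conj α * (conj u) ^ 2 + β * u + conj β * conj u +
          (f : ℂ) * u * conj u + (e : ℂ) = 0 := by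
  have hA' : detA = cA w₁ w₂ w₃ (conj w₁) (conj w₂) (conj w₃) := by
    rw [hdetA, Matrix.det_fin_three]; simp [cA]; ring
  have hB' : detB = cB w₁ w₂ w₃ (conj w₁) (conj w₂) (conj w₃) := by
    rw [hdetB, Matrix.det_fin_three]; simp [cB]; ring
  have hAc : conj detA = cA (conj w₁) (conj w₂) (conj w₃) w₁ w₂ w₃ := by
    rw [hA']; simp [cA]
  have hBc : conj detB = cB (conj w₁) (conj w₂) (conj w₃) w₁ w₂ w₃ := by
    rw [hB']; simp [cB]
  have hBc0 : conj detB ≠ 0 := by simpa using hB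
  have hu₀c : conj u₀ = conj w₁ * conj w₂ * conj w₃ * conj detA / conj detB := by
    rw [hu₀]; simp
  have K := key w₁ w₂ w₃ (conj w₁) (conj w₂) (conj w₃)
  rw [← hA', ← hB', ← hAc, ← hBc] at K
  have ND := nondeg (w₂*w₃) (w₁*w₃) (w₁*w₂) (conj w₂*conj w₃) (conj w₁*conj w₃) (conj w₁*conj w₂)
    (by intro h; apply h12; apply mul_right_cancel₀ (pow_ne_zero 2 h₃); linear_combination -h)
    (by intro h; apply h13; apply mul_right_cancel₀ (pow_ne_zero 2 h₂); linear_combination -h)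
    (by intro h; apply h23; apply mul_right_cancel₀ (pow_ne_zero 2 h₁); linear_combination -h)
  obtain ⟨A, hA⟩ : ∃ A, A = kα (w₂*w₃) (w₁*w₃) (w₁*w₂) (conj w₂*conj w₃) (conj w₁*conj w₃)
    (conj w₁*conj w₂) := ⟨_, rfl⟩
  obtain ⟨F, hF⟩ : ∃ A, A = kf (w₂*w₃) (w₁*w₃) (w₁*w₂) (conj w₂*conj w₃) (conj w₁*conj w₃)
    (conj w₁*conj w₂) := ⟨_, rfl⟩
  obtain ⟨G, hG⟩ : ∃ A, A = ke (w₂*w₃) (w₁*w₃) (w₁*w₂) (conj w₂*conj w₃) (conj w₁*conj w₃)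
    (conj w₁*conj w₂) := ⟨_, rfl⟩
  have hAcc : conj A = kα (conj w₂*conj w₃) (conj w₁*conj w₃)
    (conj w₁*conj w₂) (w₂*w₃) (w₁*w₃) (w₁*w₂) := by rw [hA]; simp [kα, d3]
  have hFc : conj F = -F := by rw [hF]; simp [kf, d3]; ring
  have hGc : conj G = -G := by rw [hG]; simp [ke, d3]; ring
  rw [← hA, ← hF, ← hG, ← hAcc] at K
  rw [← hF, ← hAcc] at ND
  have hFr : (((Complex.I * F).re : ℝ) : ℂ) = Complex.I * F := by
    rw [← Complex.conj_eq_iff_re]; simp [hFc]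
  have hGr : (((Complex.I * G).re : ℝ) : ℂ) = Complex.I * G := by
    rw [← Complex.conj_eq_iff_re]; simp [hGc]
  refine ⟨Complex.I * A, 0, (Complex.I * F).re, (Complex.I * G).re, ?_, ?_⟩
  · rintro ⟨ha, -, hf, -⟩
    have hA0 : A = 0 := by simpa using ha
    have hF0 : F = 0 := by
      rw [hf] at hFr; simpa using hFr.symm
    obtain ⟨n1, n2⟩ := ND (by simp [hA0]) hF0
    have hc1 : conj w₁ ≠ 0 := by simpa using h₁
    have hc2 : conj w₂ ≠ 0 := by simpa using h₂
    have m1 : w₃ * conj w₁ = conj w₃ * w₁ := by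
      apply mul_left_cancel₀ (mul_ne_zero h₂ hc2); linear_combination n1
    have m2 : w₃ * conj w₂ = conj w₃ * w₂ := by
      apply mul_left_cancel₀ (mul_ne_zero h₁ hc1); linear_combination n2
    have m3 : w₁ * conj w₂ = conj w₁ * w₂ := by
      apply mul_left_cancel₀ h₃; linear_combination w₁ * m2 - w₂ * m1
    apply hB
    rw [hB']; unfold cB
    linear_combination w₁ * conj w₁ ^ 2 * m2 - w₂ * conj w₂ ^ 2 * m1 - w₃ * conj w₃ ^ 2 * m3
  · rw [hFr, hGr]
    suffices H : ∀ u ∈ ({w₁ * w₂, -(w₁ * w₂), w₁ * w₃, -(w₁ * w₃), w₂ * w₃, -(w₂ * w₃), u₀} :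
          Set ℂ), A * u^2 - conj A * (conj u)^2 + F * u * conj u + G = 0 by
      intro u hu
      simp only [map_mul, Complex.conj_I, map_zero]
      linear_combination Complex.I * H u hu
    intro u hu
    simp only [Set.mem_insert_iff, Set.mem_singleton_iff] at hu
    rcases hu with rfl | rfl | rfl | rfl | rfl | rfl | rfl
    iterate 6
      rw [hAcc, hA, hF, hG]
      simp only [map_mul, map_neg, kα, kf, ke, d3]
      ring
    rw [hu₀c, hu₀]
    have : A * (w₁ * w₂ * w₃ * detA / detB)^2
        - conj A * (conj w₁ * conj w₂ * conj w₃ * conj detA / conj detB)^2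
        + F * (w₁ * w₂ * w₃ * detA / detB) *
          (conj w₁ * conj w₂ * conj w₃ * conj detA / conj detB) + G
        = (0:ℂ) / (conj detB * detB)^2 := by
      rw [← K]; field_simp
    rw [this, zero_div]
end
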